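/- arXiv:1205.1599 — 3 statements merged into one kernel-verified Lean document; each statement's English description precedes it below -/
import Mathlib

section
/- Let q be an odd prime power, n > 1, r > 1, let α_1, …, α_r ∈ F_q[x] be distinct with deg α_j < n, let ε_1, …, ε_r ∈ {1,2} be not all equal to 2, and fix an index i with ε_i = 1. Then |C(α_1,…,α_r;n)| ≤ (2r(n−1) − 1)·q^{n−1/2} + q·#G_n^c. -/
/-!
By Pellet's formula, `μ(g) = (-1)^(deg g) χ(disc g)` for monic `g` over `F_q`, `q` odd, where `χ` is
the quadratic character. Splitting `M_n` into the translation classes `{f_a + b : b ∈ F_q}`, the sum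
over one class is up to sign `∑_b ∏_j χ(D_j(b))^(ε_j)` with `D_j = D_{f_a + α_j}`, a polynomial of
degree at most `n - 1`. For bad `a` this sum is at most `q` trivially. For good `a` the polynomial
`P = ∏_{ε_j = 1} D_j` is not a constant times a square, since an irreducible factor of `D_i` divides
it exactly once. Weil's bound for `∑ χ(P(b))`, together with the number of zeros of the `D_j` with
`ε_j = 2`, then gives `(2r(n - 1) - 1) √q`, and there are at most `q^(n - 1)` good `a`.

Two inputs are proved from scratch.

* Weil's bound, in the weaker form `|∑_x χ(f(x))| ≤ (2 deg f - 1) √q` that suffices here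
  (`Stepanov.abs_sum_le`), comes from Stepanov's method: an auxiliary polynomial
  (`Stepanov.exists_aux`) of small degree vanishes to high order at all `x` with `f(x)` a square.
  Its coefficients are found by linear algebra, and it is nonzero by `Stepanov.indep`. Derivatives are
  unsuitable in small characteristic, where they lose information, so the vanishing is imposed
  instead by congruences modulo powers of `x^q - x` and of `f (1 - f^((q-1)/2))²`. Degrees `1` and `2`
  are computed directly, and for `2 deg f - 1 ≥ √q` the bound is trivial.
* Pellet's formula (`Pellet.polyMoebius_eq`) is reduced to irreducible polynomials by the formula for
  the discriminant of a product (`Pellet.pdisc_mul`). There it holds because Frobenius permutes the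
  roots cyclically (`Pellet.quadraticChar_irreducible`).
-/

open Polynomial

noncomputable section
open scoped Classical

/-- The Sylvester matrix of `P` and `Q` with respect to formal degrees `m` and `n`. -/
def sylvesterMatrix {R : Type*} [CommRing R] (m n : ℕ) (P Q : Polynomial R) :
    Matrix (Fin (n + m)) (Fin (n + m)) R :=
  Matrix.of fun i j =>
    if (i : ℕ) < n then
      (if (i : ℕ) ≤ (j : ℕ) ∧ (j : ℕ) ≤ (i : ℕ) + m then P.coeff (m + i - j) else 0)
    else
      (if (i : ℕ) - n ≤ (j : ℕ) ∧ (j : ℕ) ≤ (i : ℕ) then Q.coeff ((i : ℕ) - j) else 0)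

/-- The resultant of `P` and `Q` with respect to formal degrees `m` and `n`:
the determinant of the `(m+n) × (m+n)` Sylvester matrix. -/
def presultant {R : Type*} [CommRing R] (m n : ℕ) (P Q : Polynomial R) : R :=
  (sylvesterMatrix m n P Q).det

/-- The discriminant of a polynomial `P` of degree `m`; for monic `P` this agrees with the
standard discriminant `∏_{i<j} (r_i - r_j)²` over the roots of `P` in an algebraic closure. -/
def pdisc {R : Type*} [CommRing R] (P : Polynomial R) : R :=
  (-1) ^ (P.natDegree * (P.natDegree - 1) / 2) *
    presultant P.natDegree (P.natDegree - 1) P (Polynomial.derivative P)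

/-- `Dpoly g` is `D_g(t) = disc_x (g(x) + t)`, a polynomial in `t`. -/
def Dpoly {R : Type*} [CommRing R] (g : Polynomial R) : Polynomial R :=
  pdisc (g.map Polynomial.C + Polynomial.C Polynomial.X)

/-- `fPoly n a = x^n + a_{n-1} x^{n-1} + ... + a_1 x`. -/
def fPoly {R : Type*} [CommRing R] (n : ℕ) (a : Fin (n - 1) → R) : Polynomial R :=
  X ^ n + ∑ i : Fin (n - 1), Polynomial.C (a i) * X ^ ((i : ℕ) + 1)

/-- The Möbius function of a polynomial over a field: `(-1)^s` on squarefree polynomials with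
`s` distinct monic irreducible factors, and `0` otherwise. -/
def polyMoebius {F : Type*} [Field F] (g : Polynomial F) : ℤ :=
  if Squarefree g then (-1) ^ (UniqueFactorizationMonoid.normalizedFactors g).card else 0

/-- The set `M_n` of monic polynomials of degree `n` over a finite field. -/
def monicPolys (F : Type*) [Field F] [Fintype F] (n : ℕ) : Finset (Polynomial F) :=
  Finset.image
    (fun a : Fin n → F => X ^ n + ∑ i : Fin n, Polynomial.C (a i) * X ^ (i : ℕ))
    Finset.univ

/-- The autocorrelation sum `C(α_1, ..., α_r; n) = ∑_{F ∈ M_n} ∏_j μ(F + α_j)^{ε_j}`. -/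
def Csum (F : Type*) [Field F] [Fintype F] (n r : ℕ)
    (α : Fin r → Polynomial F) (ε : Fin r → ℕ) : ℤ :=
  ∑ g ∈ monicPolys F n, ∏ j, polyMoebius (g + α j) ^ (ε j)

/-- The "good" set `G_n` of coefficient vectors `a`: those for which `D_{f_a+α_i}(t)` has
positive degree, is squarefree, and is coprime to `D_{f_a+α_j}(t)` for every `j ≠ i`. -/
def goodSet (F : Type*) [Field F] [Fintype F] (n r : ℕ) (α : Fin r → Polynomial F)
    (i : Fin r) : Finset (Fin (n - 1) → F) :=
  Finset.univ.filter fun a =>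
    0 < (Dpoly (fPoly n a + α i)).natDegree ∧ Squarefree (Dpoly (fPoly n a + α i)) ∧
      ∀ j, j ≠ i → IsCoprime (Dpoly (fPoly n a + α i)) (Dpoly (fPoly n a + α j))

/-! ### Polynomials in two variables and Stepanov's auxiliary polynomial -/

namespace Stepanov

variable {F : Type} [Field F]

/-- A weighted degree bound. Elements `p` of `F[X][X]` are read as polynomials in `x` (inner
variable) and `t` (outer variable); `WB α N p` says that `p` has weighted degree at most `N` when `x`
has weight `1` and `t` has weight `α`. Only `α = 1` (total degree) and `α = 0` (degree in `x`) are
used. -/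
def WB (α N : ℕ) (p : F[X][X]) : Prop := ∀ i j, N < α * i + j → (p.coeff i).coeff j = 0

lemma WB.mono {α N M : ℕ} {p : F[X][X]} (h : WB α N p) (hNM : N ≤ M) : WB α M p :=
  fun i j hij => h i j (lt_of_le_of_lt hNM hij)

lemma WB.zero (α N : ℕ) : WB α N (0 : F[X][X]) := by intro i j _; simp

lemma WB.add {α N : ℕ} {p r : F[X][X]} (hp : WB α N p) (hr : WB α N r) : WB α N (p + r) := by
  intro i j h; simp [hp i j h, hr i j h]

lemma WB.sub {α N : ℕ} {p r : F[X][X]} (hp : WB α N p) (hr : WB α N r) : WB α N (p - r) := by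
  intro i j h; simp [hp i j h, hr i j h]

lemma WB.smul {α N : ℕ} {p : F[X][X]} (hp : WB α N p) (c : F) : WB α N (c • p) := by
  intro i j h; simp [hp i j h]

lemma WB.sum {α N : ℕ} {ι : Type} (s : Finset ι) {p : ι → F[X][X]}
    (hp : ∀ i ∈ s, WB α N (p i)) : WB α N (∑ i ∈ s, p i) := by
  intro i j h
  simp only [finsetSum_coeff]
  exact Finset.sum_eq_zero fun k hk => hp k hk i j h

lemma WB.mul {α N M : ℕ} {p r : F[X][X]} (hp : WB α N p) (hr : WB α M r) :
    WB α (N + M) (p * r) := by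
  intro i j h
  rw [coeff_mul, finsetSum_coeff]
  refine Finset.sum_eq_zero fun x hx => ?_
  rw [coeff_mul]
  refine Finset.sum_eq_zero fun y hy => ?_
  rw [Finset.HasAntidiagonal.mem_antidiagonal] at hx hy
  by_cases h1 : N < α * x.1 + y.1
  · rw [hp _ _ h1, zero_mul]
  · rw [hr _ _ ?_, mul_zero]
    rw [← hx, ← hy, mul_add] at h
    omega

lemma WB.one (α : ℕ) : WB α 0 (1 : F[X][X]) := by
  intro i j h
  rw [coeff_one]
  split_ifs with hi
  · subst hi
    rw [coeff_one, if_neg]; omega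
  · simp

lemma WB.pow {α N : ℕ} {p : F[X][X]} (hp : WB α N p) (k : ℕ) : WB α (k * N) (p ^ k) := by
  induction k with
  | zero => simpa using WB.one α
  | succ k ih => rw [pow_succ, Nat.succ_mul]; exact ih.mul hp

lemma WB.C {α N : ℕ} {p : F[X]} (hp : p.natDegree ≤ N) : WB α N (C p) := by
  intro i j h
  rw [coeff_C]
  split_ifs with hi
  · subst hi
    exact coeff_eq_zero_of_natDegree_lt (by omega)
  · simp

lemma WB.X (α : ℕ) : WB α α (X : F[X][X]) := by
  intro i j h
  rw [coeff_X]
  split_ifs with hi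
  · subst hi
    rw [coeff_one, if_neg]; omega
  · simp

/-- The polynomial `f(x + t)` in `x` and `t`. -/
def shift (f : F[X]) : F[X][X] := f.eval₂ (C.comp C) (C X + X)

lemma shift_WB (f : F[X]) : WB 1 f.natDegree (shift f) := by
  rw [shift, eval₂_eq_sum_range]
  refine WB.sum _ fun i hi => ?_
  have h1 : WB 1 1 (Polynomial.C Polynomial.X + Polynomial.X : F[X][X]) :=
    (WB.C (by simp)).add (WB.X 1)
  have h2 := (WB.C (α := 1) (N := 0) (p := Polynomial.C (f.coeff i)) (by simp)).mul (h1.pow i)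
  refine WB.mono h2 ?_
  have := Finset.mem_range.1 hi
  omega

/-- The pair `(P_k, Q_k)` of polynomials in `x` and `t` for which `P_k + Q_k e` is the `k`-th power of
`f(x) + f(x + t) - 2 e`, where `e` is a formal square root of `f(x) f(x + t)`. -/
def PQ (f : F[X]) : ℕ → F[X][X] × F[X][X]
  | 0 => (1, 0)
  | k + 1 => ((C f + shift f) * (PQ f k).1 - (2 : F) • (C f * shift f * (PQ f k).2),
      (C f + shift f) * (PQ f k).2 - (2 : F) • (PQ f k).1)

/-- `P_k` and `Q_k` have total degree at most `k deg f` and `(k - 1) deg f`. -/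
lemma PQ_WB (f : F[X]) (k : ℕ) : WB 1 (f.natDegree * (k + 1)) (PQ f (k + 1)).1 ∧
    WB 1 (f.natDegree * k) (PQ f (k + 1)).2 := by
  have h0 : WB 1 f.natDegree (C f + shift f) := (WB.C le_rfl).add (shift_WB f)
  induction k with
  | zero =>
    constructor
    · simp only [PQ, mul_one, mul_zero, smul_zero, sub_zero, zero_add]
      exact h0
    · simp only [PQ, mul_zero, zero_sub]
      have := (WB.zero 1 0).sub ((WB.one (F := F) 1).smul 2)
      simpa using this
  | succ k ih =>
    rw [PQ]
    constructor
    · refine WB.sub ((h0.mul ih.1).mono (by rw [mul_add _ (k+1)]; omega)) (WB.smul ?_ _)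
      exact (((WB.C le_rfl).mul (shift_WB f)).mul ih.2).mono (by ring_nf; omega)
    · exact WB.sub ((h0.mul ih.2).mono (by ring_nf; omega)) (WB.smul ih.1 _)

/-- The defining property of `(P_k, Q_k)`, after giving `t` a value for which `f(x) f(x + t)` has a
square root `e` among the polynomials. -/
lemma PQ_eval (f t e : F[X]) (he : e ^ 2 = f * (shift f).eval t) (k : ℕ) :
    (PQ f k).1.eval t + (PQ f k).2.eval t * e = (f + (shift f).eval t - 2 * e) ^ k := by
  induction k with
  | zero => simp [PQ]
  | succ k ih =>
    rw [pow_succ, ← ih]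
    simp only [PQ, eval_add, eval_sub, eval_mul, eval_smul, eval_C, smul_eq_C_mul]
    simp only [map_ofNat]
    linear_combination 2 * (eval t (PQ f k).2) * he

lemma shift_eval (f t : F[X]) : (shift f).eval t = f.eval₂ C (X + t) := by
  rw [shift, ← coe_evalRingHom, hom_eval₂]
  simp only [map_add, coe_evalRingHom, eval_C, eval_X]
  congr 1
  ext x; simp

/-- `Q_k` does not vanish at `t = 0` for `k ≥ 1`. At `t = 0` both `f` and `-f` are square roots of
`f(x) f(x + t)`, and they give `P_k + Q_k f = 0` and `P_k - Q_k f = (4 f)^k`. -/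
lemma PQ_snd_ne (f : F[X]) (hf : f ≠ 0) (h2 : (2 : F) ≠ 0) (k : ℕ) :
    (PQ f (k + 1)).2.coeff 0 ≠ 0 := by
  intro h
  rw [coeff_zero_eq_eval_zero] at h
  have hs : (shift f).eval 0 = f := by rw [shift_eval]; simp
  have h1 := PQ_eval f 0 f (by rw [hs, sq]) (k + 1)
  have h3 := PQ_eval f 0 (-f) (by rw [hs]; ring) (k + 1)
  rw [h, hs] at h1 h3
  have h4 : (f + f - 2 * -f) ^ (k + 1) = (0 : F[X]) := by
    rw [← h3]
    have : f + f - 2 * f = 0 := by ring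
    rw [this, zero_pow (by omega)] at h1
    simpa using h1
  have h5 := eq_zero_of_pow_eq_zero h4
  have h6 : (C (2 * 2) : F[X]) * f = 0 := by
    rw [← h5]; simp only [map_mul, map_ofNat]; ring
  rcases mul_eq_zero.1 h6 with h7 | h7
  · rw [C_eq_zero] at h7
    exact h2 (by simpa using h7)
  · exact hf h7

/-- Substituting `t = x^q` is injective on polynomials of degree less than `q` in `x`: monomials do
not overlap. -/
lemma eval_inj (q : ℕ) (p : F[X][X]) (N : ℕ) (hN : N < q) (hp : WB 0 N p)
    (h : p.eval (X ^ q) = 0) : p = 0 := by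
  have key : ∀ n, ∀ p : F[X][X], p.natDegree ≤ n → WB 0 N p → p.eval (X ^ q) = 0 →
      p = 0 := by
    intro n
    induction n with
    | zero =>
      intro p hn hp h
      have hn := eq_C_of_natDegree_le_zero hn
      rw [hn] at h ⊢
      rw [eval_C] at h
      rw [h, C_0]
    | succ n ih =>
      intro p hn hp h
      have hd := divX_mul_X_add p
      have h0 : p.coeff 0 = 0 := by
        have h1 : p.divX.eval (X ^ q) * X ^ q + p.coeff 0 = 0 := by
          rw [← hd] at h
          simpa using h
        ext j
        rw [coeff_zero]
        by_cases hj : N < j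
        · exact hp 0 j (by simpa using hj)
        · have := congrArg (fun r => coeff r j) h1
          simp only [coeff_add, coeff_zero, coeff_mul_X_pow'] at this
          rw [if_neg (by omega), zero_add] at this
          exact this
      have h2 : p.divX = 0 := by
        refine ih _ ?_ ?_ ?_
        · rw [natDegree_divX_eq_natDegree_tsub_one]; omega
        · intro i j hij
          rw [coeff_divX]
          exact hp (i + 1) j (by simpa using hij)
        · rw [← hd, h0] at h
          simp only [map_zero, add_zero, eval_mul, eval_X] at h
          rcases mul_eq_zero.1 h with h | h
          · exact h
          · exact absurd h (pow_ne_zero _ X_ne_zero)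
      rw [← hd, h2, h0]; simp
  exact key _ p le_rfl hp h

variable [Fintype F]

/-- Over `F_q`, `f(x^q) = f(x)^q`. -/
lemma expand_eval (f : F[X]) :
    f.eval₂ C (X ^ Fintype.card F) = f ^ Fintype.card F := by
  rw [← FiniteField.expand_card f, expand_eq_comp_X_pow]; rfl

/-- The nonvanishing step of Stepanov's method. A relation `A(x, x^q) + f^((q+1)/2) B(x, x^q) = 0`
squares to `A² = f(x) f(t) B²` at `t = x^q`, with `f(t)` the polynomial `f.map C`. When the degrees
in `x` are small this is an identity of polynomials in `x` and `t`, and comparing leading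
coefficients in `t` makes `f` a constant times a square unless `A = B = 0`. -/
lemma indep (f : F[X]) (hns : ∀ (c : F) (r s : F[X]), c ≠ 0 → s ≠ 0 → r ^ 2 ≠ C c * f * s ^ 2)
    (hodd : Odd (Fintype.card F)) (A B : F[X][X]) (a b : ℕ)
    (hA : WB 0 a A) (hB : WB 0 b B)
    (ha : 2 * a < Fintype.card F) (hb : f.natDegree + 2 * b < Fintype.card F)
    (h : A.eval (X ^ Fintype.card F) +
      f ^ ((Fintype.card F + 1) / 2) * B.eval (X ^ Fintype.card F) = 0) :
    A = 0 ∧ B = 0 := by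
  set q := Fintype.card F with hq
  have hf : f ≠ 0 := by
    rintro rfl
    exact hns 1 0 1 one_ne_zero one_ne_zero (by simp)
  have hq2 : (q + 1) / 2 + (q + 1) / 2 = q + 1 := by
    obtain ⟨k, hk⟩ := hodd; omega
  have h1 : (A ^ 2 - C f * f.map C * B ^ 2).eval (X ^ q) = 0 := by
    have hA' : A.eval (X ^ q) = - (f ^ ((q + 1) / 2) * B.eval (X ^ q)) :=
      eq_neg_of_add_eq_zero_left h
    have hm : (f.map C).eval (X ^ q) = f ^ q := by
      rw [eval_map, hq, expand_eval]
    rw [eval_sub, eval_mul, eval_mul, eval_pow, eval_pow, eval_C, hm, hA', neg_sq, mul_pow,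
      ← pow_mul, mul_two, hq2, pow_succ]
    ring
  have hfm : WB 0 0 (f.map (C : F →+* F[X])) := by
    intro i j hij
    rw [coeff_map, coeff_C, if_neg (by omega)]
  have h2 : WB 0 (q - 1) (A ^ 2 - C f * f.map C * B ^ 2) := by
    refine WB.sub ((hA.pow 2).mono (by omega)) (((WB.mul (WB.mul (WB.C le_rfl) hfm)
      (hB.pow 2))).mono (by omega))
  have h3 := eval_inj q _ (q - 1) (by have := Fintype.card_pos (α := F); omega) h2 h1
  rw [sub_eq_zero] at h3
  have hB0 : B = 0 := by
    by_contra hB0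
    refine hns f.leadingCoeff A.leadingCoeff B.leadingCoeff (by simpa using hf)
      (by simpa using hB0) ?_
    have := congrArg leadingCoeff h3
    rw [leadingCoeff_pow, leadingCoeff_mul, leadingCoeff_mul, leadingCoeff_pow, leadingCoeff_C,
      leadingCoeff_map_of_injective (C_injective)] at this
    rw [this]; ring
  refine ⟨?_, hB0⟩
  rw [hB0] at h3
  have : A ^ 2 = 0 := by rw [h3]; simp
  exact pow_eq_zero_iff (two_ne_zero) |>.1 this

/-- The polynomial `x^i Z^j` attached to a pair of indices `p = (i, j)`. -/
def bas (Z : F[X][X]) {A B : ℕ} (p : Fin A × Fin B) : F[X][X] :=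
  C (X ^ (p.1 : ℕ)) * Z ^ (p.2 : ℕ)

omit [Fintype F] in
lemma bas_X_WB {A B : ℕ} (p : Fin A × Fin B) : WB 0 (A - 1) (bas (F := F) X p) := by
  have h := (WB.C (F := F) (α := 0) (N := p.1) (p := X ^ (p.1 : ℕ)) (by simp)).mul
    ((WB.X (F := F) 0).pow p.2)
  exact h.mono (by have := p.1.2; omega)

omit [Fintype F] in
lemma bas_X_inj {A B : ℕ} (u : Fin A × Fin B → F)
    (h : ∑ p, u p • bas (F := F) X p = 0) : u = 0 := by
  ext ⟨i, j⟩
  have := congrArg (fun r => (coeff (coeff r j) i)) h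
  simp only [finsetSum_coeff, coeff_smul, bas, coeff_C_mul, coeff_X_pow, coeff_zero,
    mul_ite, mul_one, mul_zero, smul_eq_mul] at this
  rw [Finset.sum_eq_single (i, j)] at this
  · simpa using this
  · rintro ⟨i', j'⟩ _ hne
    rw [ne_eq, Prod.mk.injEq, not_and_or, Fin.ext_iff, Fin.ext_iff] at hne
    dsimp only
    by_cases h1 : (j : ℕ) = j'
    · rw [if_pos h1, coeff_X_pow, if_neg (by omega), mul_zero]
    · rw [if_neg h1, coeff_zero, mul_zero]
  · simp

/-- There are more unknowns than equations in the linear system of `exists_aux`. The sum over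
`i < 2h` on the right counts the unknowns `w`, and replacing `m (k_i + 1)` by `m` there costs
`m ∑ k_i = m h (h - 1)`, where `k_i = ⌊(2h - 1 - i) / 2⌋`. -/
lemma count_aux (h m D v : ℕ)
    (hv : ∑ i : Fin (2 * h), (D + 1 - i) + m * (h * (h - 1)) < v) :
    ∑ i : Fin (2 * h), (D + 1 - i) + ∑ i : Fin (2 * h), (D + 1 - m - i) <
      v + ∑ i : Fin (2 * h), (D + 1 - i - m * ((2 * h - 1 - i) / 2 + 1)) := by
  have h1 : ∑ i : Fin (2 * h), (2 * h - 1 - (i : ℕ)) / 2 = h * (h - 1) := by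
    clear hv
    rw [Fin.sum_univ_eq_sum_range (fun i => (2 * h - 1 - i) / 2),
      Finset.sum_range_reflect (fun i => i / 2)]
    induction h with
    | zero => simp
    | succ k ih =>
      rw [mul_add, mul_one, Finset.sum_range_succ, Finset.sum_range_succ, ih]
      cases k with
      | zero => simp
      | succ k =>
        simp only [Nat.add_sub_cancel]
        have e1 : 2 * (k + 1) / 2 = k + 1 := by omega
        have e2 : (2 * (k + 1) + 1) / 2 = k + 1 := by omega
        rw [e1, e2]; ring
  have h2 : ∑ i : Fin (2 * h), (D + 1 - m - i) ≤
      ∑ i : Fin (2 * h), (D + 1 - i - m * ((2 * h - 1 - i) / 2 + 1)) + m * (h * (h - 1)) := by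
    rw [← h1, Finset.mul_sum, ← Finset.sum_add_distrib]
    refine Finset.sum_le_sum fun i _ => ?_
    rw [mul_add]
    omega
  omega

omit [Fintype F] in
/-- Combinations of the `x^j t^i G_i` with `i < l` that are divisible by `t^l` are trivial when no
`G_i` vanishes at `t = 0`: the lowest power of `t` determines the coefficients, one `i` at a time. -/
lemma triangular (l : ℕ) (n : Fin l → ℕ) (G : ℕ → F[X][X]) (hG : ∀ k, (G k).coeff 0 ≠ 0)
    (w : (Σ i : Fin l, Fin (n i)) → F)
    (h : (X : F[X][X]) ^ l ∣ ∑ p, w p • (C (X ^ (p.2 : ℕ)) * X ^ (p.1 : ℕ) * G p.1)) :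
    w = 0 := by
  have key : ∀ i : ℕ, ∀ hi : i < l, ∀ j, w ⟨⟨i, hi⟩, j⟩ = 0 := by
    intro i
    induction i using Nat.strong_induction_on with
    | _ i ih =>
      intro hi
      have h1 := X_pow_dvd_iff.1 h i hi
      rw [finsetSum_coeff, Fintype.sum_sigma, Finset.sum_eq_single (⟨i, hi⟩ : Fin l)] at h1
      · have h2 : (∑ j : Fin (n ⟨i, hi⟩), C (w ⟨⟨i, hi⟩, j⟩) * X ^ (j : ℕ)) * (G i).coeff 0 = 0 := by
          rw [← h1, Finset.sum_mul]
          refine Finset.sum_congr rfl fun j _ => ?_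
          have h5 : (C (X ^ (j : ℕ)) * X ^ i * G i).coeff i = X ^ (j : ℕ) * (G i).coeff 0 := by
            rw [mul_assoc, coeff_C_mul, coeff_X_pow_mul', if_pos le_rfl, Nat.sub_self]
          rw [coeff_smul, h5, smul_eq_C_mul, mul_assoc]
        have h3 := (mul_eq_zero.1 h2).resolve_right (hG i)
        intro j
        have h4 := congrArg (fun r => coeff r j) h3
        simp only [finsetSum_coeff, coeff_C_mul, coeff_X_pow, coeff_zero, mul_ite, mul_one,
          mul_zero] at h4
        rw [Finset.sum_eq_single j] at h4
        · simpa using h4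
        · intro j' _ hne
          rw [if_neg]
          rw [ne_eq, Fin.ext_iff] at hne
          omega
        · simp
      · intro i' _ hne
        rw [ne_eq, Fin.ext_iff] at hne
        refine Finset.sum_eq_zero fun j _ => ?_
        rcases lt_or_gt_of_ne hne with hlt | hlt
        · rw [ih i' hlt i'.2 j, zero_smul, coeff_zero]
        · rw [coeff_smul, mul_assoc, coeff_C_mul, coeff_X_pow_mul', if_neg (by simpa using hlt),
            mul_zero, smul_zero]
      · simp
  ext ⟨i, j⟩
  exact key i i.2 j

/-- Stepanov's auxiliary polynomial: a nonzero polynomial of degree at most `N` vanishing to order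
`2h` where `f` takes nonzero square values, and to order `h` at the zeros of `f`.

Put `T = x^q - x`, `E = f^((q+1)/2)` and `η = f + f^q - 2 E = f (1 - f^((q-1)/2))²`. The polynomial
has the form `R = S₁ + E S₂`, where `S₁`, `S₂` are combinations of `x^i (x + t)^j` at `t = T`, that is,
of `x^i x^(qj)`. It is also required to be a combination of the `x^j T^i η^(k_i + 1)`, `i < 2h`,
`k_i = ⌊(2h - 1 - i) / 2⌋`, modulo `T^(2h)`; this forces the vanishing, because `η` vanishes doubly
where `f` is a nonzero square and simply at the zeros of `f`. Since `E² = f(x) f(x + T)`, the power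
`η^k` is `P_k + Q_k E` at `t = T`, so that the requirement is a system of linear equations modulo
`t^(2h)` in the coefficients `u`, `u'`, `w` of the three combinations. -/
theorem exists_aux (f : F[X])
    (hns : ∀ (c : F) (r s : F[X]), c ≠ 0 → s ≠ 0 → r ^ 2 ≠ C c * f * s ^ 2)
    (hodd : Odd (Fintype.card F)) (A B A' B' h D N : ℕ)
    (hA : 2 * A ≤ Fintype.card F + 1) (hA' : f.natDegree + 2 * A' ≤ Fintype.card F + 1)
    (hm : f.natDegree < Fintype.card F)
    (hD : A + B ≤ D + 2) (hD' : A' + B' + f.natDegree ≤ D + 2)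
    (hN : ∀ i < A, ∀ j < B, i + Fintype.card F * j ≤ N)
    (hN' : ∀ i < A', ∀ j < B',
      i + Fintype.card F * j + f.natDegree * ((Fintype.card F + 1) / 2) ≤ N)
    (hcount : ∑ i : Fin (2 * h), (D + 1 - i) + f.natDegree * (h * (h - 1)) < A * B + A' * B') :
    ∃ R : F[X], R ≠ 0 ∧ R.natDegree ≤ N ∧
      (∀ x, f.eval x ≠ 0 → IsSquare (f.eval x) → (X - C x) ^ (2 * h) ∣ R) ∧
      (∀ x, f.eval x = 0 → (X - C x) ^ h ∣ R) := by
  set q := Fintype.card F with hq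
  set m := f.natDegree with hmdef
  have hf : f ≠ 0 := by
    rintro rfl
    exact hns 1 0 1 one_ne_zero one_ne_zero (by simp)
  have h2 : (2 : F) ≠ 0 := by
    refine Ring.two_ne_zero ?_
    intro hc
    have := FiniteField.even_card_iff_char_two.1 hc
    obtain ⟨k, hk⟩ := hodd
    omega
  let kk : ℕ → ℕ := fun i => (2 * h - 1 - i) / 2
  -- `Y` is `x + t`; `WI` indexes the unknowns `w`, and `U1`, `U2` index the equations
  let Y : F[X][X] := C X + X
  let WI := Σ i : Fin (2 * h), Fin (D + 1 - i - m * (kk i + 1))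
  let U1 := Σ i : Fin (2 * h), Fin (D + 1 - i)
  let U2 := Σ i : Fin (2 * h), Fin (D + 1 - m - i)
  let wb : (ℕ → F[X][X]) → WI → F[X][X] := fun G p =>
    C (X ^ (p.2 : ℕ)) * X ^ (p.1 : ℕ) * G (kk p.1)
  let P : ℕ → F[X][X] := fun k => (PQ f (k + 1)).1
  let Q : ℕ → F[X][X] := fun k => (PQ f (k + 1)).2
  let V := (Fin A × Fin B → F) × (Fin A' × Fin B' → F) × (WI → F)
  let L1 : V →ₗ[F] F[X][X] :=
    (Fintype.linearCombination F (bas Y)).comp (LinearMap.fst F _ _) -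
    (Fintype.linearCombination F (wb P)).comp ((LinearMap.snd F _ _).comp (LinearMap.snd F _ _))
  let L2 : V →ₗ[F] F[X][X] :=
    (Fintype.linearCombination F (bas Y)).comp ((LinearMap.fst F _ _).comp (LinearMap.snd F _ _)) -
    (Fintype.linearCombination F (wb Q)).comp ((LinearMap.snd F _ _).comp (LinearMap.snd F _ _))
  -- `co i j` extracts the coefficient of `t^i x^j`
  let co : ℕ → ℕ → F[X][X] →ₗ[F] F := fun i j =>
    (lcoeff F j).comp ((lcoeff F[X] i).restrictScalars F)
  let L : V →ₗ[F] (U1 → F) × (U2 → F) :=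
    (LinearMap.pi (fun p : U1 => (co p.1 p.2).comp L1)).prod
      (LinearMap.pi (fun p : U2 => (co p.1 p.2).comp L2))
  have hker : LinearMap.ker L ≠ ⊥ := by
    apply LinearMap.ker_ne_bot_of_finrank_lt
    simp only [V, U1, U2, WI, Module.finrank_prod, Module.finrank_fintype_fun_eq_card,
      Fintype.card_sigma, Fintype.card_prod, Fintype.card_fin]
    have := count_aux h m D _ hcount
    rw [← add_assoc]
    exact this
  obtain ⟨⟨u, u', w⟩, hv, hv0⟩ := (Submodule.ne_bot_iff _).1 hker
  have hYWB : WB 1 1 Y := (WB.C (by simp)).add (WB.X 1)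
  have hbas : ∀ (a b : ℕ) (p : Fin a × Fin b), WB 1 (a + b - 2) (bas Y p) := by
    intro a b p
    have h1 := (WB.C (F := F) (α := 1) (N := p.1) (p := X ^ (p.1 : ℕ)) (by simp)).mul
      (hYWB.pow p.2)
    exact h1.mono (by have := p.1.2; have := p.2.2; omega)
  have hwbWB : ∀ p : WI, WB 1 (p.1 + p.2) (C (X ^ (p.2 : ℕ)) * X ^ (p.1 : ℕ) : F[X][X]) := by
    intro p
    exact ((WB.C (F := F) (α := 1) (N := p.2) (p := X ^ (p.2 : ℕ)) (by simp)).mul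
      ((WB.X (F := F) 1).pow p.1)).mono (by omega)
  have hL1e : ∀ u u' w, L1 (u, u', w) = ∑ p, u p • bas Y p - ∑ p, w p • wb P p :=
    fun _ _ _ => rfl
  have hL2e : ∀ u u' w, L2 (u, u', w) = ∑ p, u' p • bas Y p - ∑ p, w p • wb Q p :=
    fun _ _ _ => rfl
  -- Coefficients outside the range of the imposed equations vanish for degree reasons.
  have hL1WB : WB 1 D (L1 (u, u', w)) := by
    rw [hL1e]
    refine WB.sub (WB.sum _ fun p _ => ((hbas _ _ p).mono (by omega)).smul _)
      (WB.sum _ fun p _ => WB.smul ?_ _)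
    refine ((hwbWB p).mul (PQ_WB f (kk p.1)).1).mono ?_
    have h3 : (p.2 : ℕ) < D + 1 - p.1 - m * (kk p.1 + 1) := p.2.2
    rw [← hmdef]
    generalize (p.2 : ℕ) = y at h3 ⊢
    generalize m * (kk p.1 + 1) = z at h3 ⊢
    omega
  have hL2WB : ∀ i j, D < i + j + m → ((L2 (u, u', w)).coeff i).coeff j = 0 := by
    intro i j hij
    simp only [hL2e, coeff_sub, finsetSum_coeff,
      coeff_smul]
    rw [Finset.sum_eq_zero, Finset.sum_eq_zero, sub_zero]
    · intro p _
      rw [((hwbWB p).mul (PQ_WB f (kk p.1)).2) i j, smul_zero]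
      have h3 : (p.2 : ℕ) < D + 1 - p.1 - m * (kk p.1 + 1) := p.2.2
      have h4 : m * (kk p.1 + 1) = m * kk p.1 + m := by ring
      rw [← hmdef]
      generalize (p.2 : ℕ) = y at h3 ⊢
      rw [h4] at h3
      generalize m * (kk p.1) = z at h3 ⊢
      omega
    · intro p _
      rw [hbas _ _ p i j, smul_zero]
      have := p.1.2
      have := p.2.2
      omega
  have hLv : L (u, u', w) = 0 := hv
  have hd1 : (X : F[X][X]) ^ (2 * h) ∣ L1 (u, u', w) := by
    rw [X_pow_dvd_iff]
    intro i hi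
    ext j
    rw [coeff_zero]
    by_cases hij : D < i + j
    · exact hL1WB i j (by omega)
    · have := congrFun (congrArg Prod.fst hLv) ⟨⟨i, hi⟩, ⟨j, by show j < D + 1 - i; omega⟩⟩
      exact this
  have hd2 : (X : F[X][X]) ^ (2 * h) ∣ L2 (u, u', w) := by
    rw [X_pow_dvd_iff]
    intro i hi
    ext j
    rw [coeff_zero]
    by_cases hij : D < i + j + m
    · exact hL2WB i j hij
    · have := congrFun (congrArg Prod.snd hLv) ⟨⟨i, hi⟩, ⟨j, by show j < D + 1 - m - i; omega⟩⟩
      exact this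
  -- Otherwise `w` vanishes too, by triangularity of the second family of equations.
  have hnz : ¬ (u = 0 ∧ u' = 0) := by
    rintro ⟨rfl, rfl⟩
    have hw : w ≠ 0 := by
      rintro rfl; exact hv0 rfl
    refine hw (triangular _ _ (fun i => Q (kk i)) (fun k => PQ_snd_ne f hf h2 _) w ?_)
    have h3 := (dvd_neg).2 hd2
    simp only [hL2e, Pi.zero_apply, zero_smul,
      Finset.sum_const_zero, zero_sub, neg_neg] at h3
    exact h3
  obtain ⟨Z1, hZ1⟩ := hd1
  obtain ⟨Z2, hZ2⟩ := hd2
  rw [hL1e] at hZ1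
  rw [hL2e] at hZ2
  let T : F[X] := X ^ q - X
  let E : F[X] := f ^ ((q + 1) / 2)
  let S1 : F[X][X] := ∑ p, u p • bas Y p
  let S2 : F[X][X] := ∑ p, u' p • bas Y p
  have hq2 : (q + 1) / 2 * 2 = q + 1 := by
    obtain ⟨k, hk⟩ := hodd; omega
  have hsT : (shift f).eval T = f ^ q := by
    rw [shift_eval]
    show f.eval₂ C (X + (X ^ q - X)) = f ^ q
    rw [add_sub_cancel, hq, expand_eval]
  have hE : E ^ 2 = f * (shift f).eval T := by
    rw [hsT]
    show (f ^ ((q + 1) / 2)) ^ 2 = _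
    rw [← pow_mul, hq2, pow_succ']
  let η : F[X] := f + f ^ q - 2 * E
  have hbT : ∀ {a b : ℕ} (p : Fin a × Fin b),
      (bas Y p).eval T = X ^ (p.1 : ℕ) * (X ^ q) ^ (p.2 : ℕ) := by
    intro a b p
    simp only [bas, Y, T, eval_mul, eval_C, eval_pow, eval_add, eval_X, add_sub_cancel]
  -- At `t = T` the congruences modulo `t^(2h)` become congruences modulo `T^(2h)`.
  have hR : S1.eval T + E * S2.eval T =
      ∑ p : WI, w p • (X ^ (p.2 : ℕ) * T ^ (p.1 : ℕ) * η ^ (kk p.1 + 1)) +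
        T ^ (2 * h) * (Z1.eval T + E * Z2.eval T) := by
    have e1 : S1 = ∑ p : WI, w p • wb P p + X ^ (2 * h) * Z1 := by
      rw [← hZ1]; ring
    have e2 : S2 = ∑ p : WI, w p • wb Q p + X ^ (2 * h) * Z2 := by
      rw [← hZ2]; ring
    have e3 : ∀ p : WI, X ^ (p.2 : ℕ) * T ^ (p.1 : ℕ) * η ^ (kk p.1 + 1) =
        (wb P p).eval T + E * (wb Q p).eval T := by
      intro p
      have := PQ_eval f T E hE (kk p.1 + 1)
      rw [hsT] at this
      show _ * (f + f ^ q - 2 * E) ^ (kk p.1 + 1) = _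
      rw [← this]
      simp only [wb, P, Q, eval_mul, eval_C, eval_pow, eval_X]
      ring
    rw [e1, e2]
    simp only [e3, smul_add, Finset.sum_add_distrib, eval_add, eval_mul, eval_pow, eval_X,
      eval_finsetSum, eval_smul, mul_add, Finset.mul_sum, mul_smul_comm]
    ring
  have hTx : ∀ x : F, X - C x ∣ T := by
    intro x
    rw [dvd_iff_isRoot, IsRoot.def]
    simp only [T, eval_sub, eval_pow, eval_X]
    rw [hq, FiniteField.pow_card, sub_self]
  refine ⟨S1.eval T + E * S2.eval T, ?_, ?_, ?_, ?_⟩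
  · intro h0
    have hX : ∀ {a b : ℕ} (p : Fin a × Fin b),
        (bas (F := F) X p).eval (X ^ q) = X ^ (p.1 : ℕ) * (X ^ q) ^ (p.2 : ℕ) := by
      intro a b p
      simp only [bas, eval_mul, eval_C, eval_pow, eval_X]
    have e1 : S1.eval T = (∑ p, u p • bas (F := F) X p).eval (X ^ q) := by
      simp only [S1, eval_finsetSum, eval_smul, hbT, hX]
    have e2 : S2.eval T = (∑ p, u' p • bas (F := F) X p).eval (X ^ q) := by
      simp only [S2, eval_finsetSum, eval_smul, hbT, hX]
    rw [e1, e2] at h0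
    have := indep f hns hodd _ _ (A - 1) (A' - 1) (WB.sum _ fun p _ => (bas_X_WB p).smul _)
      (WB.sum _ fun p _ => (bas_X_WB p).smul _)
      (by have := Fintype.card_pos (α := F); omega) (by omega) h0
    exact hnz ⟨bas_X_inj u this.1, bas_X_inj u' this.2⟩
  · refine natDegree_add_le_of_degree_le ?_ ?_
    · simp only [S1, eval_finsetSum, eval_smul, hbT]
      refine natDegree_sum_le_of_forall_le _ _ fun p _ => (natDegree_smul_le _ _).trans ?_
      rw [← pow_mul, ← pow_add, natDegree_X_pow]
      exact hN _ p.1.2 _ p.2.2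
    · simp only [S2, eval_finsetSum, eval_smul, hbT, Finset.mul_sum]
      refine natDegree_sum_le_of_forall_le _ _ fun p _ => ?_
      rw [mul_smul_comm]
      refine (natDegree_smul_le _ _).trans (natDegree_mul_le.trans ?_)
      rw [← pow_mul, ← pow_add, natDegree_X_pow, natDegree_pow]
      have := hN' _ p.1.2 _ p.2.2
      rw [← hmdef]
      nlinarith
  -- order of vanishing `i + 2 (k_i + 1) ≥ 2h` of each summand
  · intro x hx hsq
    have hη : (X - C x) ^ 2 ∣ η := by
      have e1 : η = f * (1 - f ^ ((q - 1) / 2)) ^ 2 := by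
        obtain ⟨k, hk⟩ := hodd
        have a1 : (q + 1) / 2 = k + 1 := by omega
        have a2 : (q - 1) / 2 = k := by omega
        simp only [η, E]
        rw [a1, a2, hk]
        ring
      rw [e1]
      refine Dvd.dvd.mul_left (pow_dvd_pow_of_dvd ?_ 2) _
      rw [dvd_iff_isRoot, IsRoot.def, eval_sub, eval_one, eval_pow, sub_eq_zero]
      have hc : ringChar F ≠ 2 := by
        intro hc
        have := FiniteField.even_card_iff_char_two.1 hc
        obtain ⟨k, hk⟩ := hodd
        omega
      have := (FiniteField.isSquare_iff hc hx).1 hsq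
      have a2 : (q - 1) / 2 = q / 2 := by
        obtain ⟨k, hk⟩ := hodd
        omega
      rw [a2]; exact this.symm
    rw [hR]
    refine dvd_add (Finset.dvd_sum fun p _ => ?_) (Dvd.dvd.mul_right (pow_dvd_pow_of_dvd (hTx x) _) _)
    rw [smul_eq_C_mul]
    refine Dvd.dvd.mul_left ?_ _
    rw [mul_assoc]
    refine Dvd.dvd.mul_left ?_ _
    have h5 := mul_dvd_mul (pow_dvd_pow_of_dvd (hTx x) p.1) (pow_dvd_pow_of_dvd hη (kk p.1 + 1))
    refine dvd_trans ?_ h5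
    rw [← pow_mul, ← pow_add]
    refine pow_dvd_pow _ ?_
    have := p.1.2
    show _ ≤ _ + 2 * ((2 * h - 1 - p.1) / 2 + 1)
    omega
  -- order of vanishing `i + (k_i + 1) ≥ h` of each summand
  · intro x hx
    have hη : X - C x ∣ η := by
      have hfx : X - C x ∣ f := dvd_iff_isRoot.2 hx
      refine dvd_sub (dvd_add hfx (dvd_pow hfx (by have := Fintype.card_pos (α := F); omega)))
        (Dvd.dvd.mul_left (dvd_pow hfx (by omega)) _)
    rw [hR]
    refine dvd_add (Finset.dvd_sum fun p _ => ?_) (Dvd.dvd.mul_right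
      ((pow_dvd_pow _ (by omega)).trans (pow_dvd_pow_of_dvd (hTx x) _)) _)
    rw [smul_eq_C_mul]
    refine Dvd.dvd.mul_left ?_ _
    rw [mul_assoc]
    refine Dvd.dvd.mul_left ?_ _
    have h5 := mul_dvd_mul (pow_dvd_pow_of_dvd (hTx x) p.1) (pow_dvd_pow_of_dvd hη (kk p.1 + 1))
    refine dvd_trans ?_ h5
    rw [← pow_add]
    refine pow_dvd_pow _ ?_
    have := p.1.2
    show _ ≤ _ + ((2 * h - 1 - p.1) / 2 + 1)
    omega

end Stepanov

/-! ### Weil's bound for the quadratic character -/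

namespace Stepanov

/-- The margin in the Stepanov inequality. With `s = √q`, `m = deg f`, vanishing order `2h` and a
gap `c` between the ranges of exponents in `S₁` and `S₂`, the bound `(2m - 1) s` results once
`Phi m s h c ≥ 0`. -/
def Phi (m s h c : ℝ) : ℝ :=
  h * s ^ 2 * (1 + m - c) - m * h ^ 2 * s ^ 2 + (2 * m - 1) * s * h * (s ^ 2 + 1 - c - 2 * h)
    - (s ^ 2 - 1) * (s ^ 2 + 1 - c - 2 * h) / 2 - c * s ^ 2 * (s ^ 2 + 1) / 2 + c ^ 2 * s ^ 2

lemma Phi_endpoint_neg (w u : ℝ) (hw : 0 ≤ w) (hu : 0 ≤ u) :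
    0 ≤ Phi (3 + w) (5 + 2 * w + u) ((5 + 2 * w + u - 1) / 2) ((4 + w) / 2) := by
  unfold Phi
  ring_nf
  positivity

lemma Phi_endpoint_pos (w u : ℝ) (hw : 0 ≤ w) (hu : 0 ≤ u) :
    0 ≤ Phi (3 + w) (5 + 2 * w + u) ((5 + 2 * w + u + 1) / 2) ((4 + w) / 2) := by
  unfold Phi
  ring_nf
  positivity

/-- `Phi` is concave in `h`, hence is bounded below on `|2h - s| ≤ 1` by its values at the two
endpoints; and decreasing `c` below `(m + 1) / 2` increases it. -/
lemma Phi_nonneg (m s h c : ℝ) (hm : 3 ≤ m) (hs : 2 * m - 1 ≤ s)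
    (hc : c ≤ (m + 1) / 2) (h1 : s - 1 ≤ 2 * h) (h2 : 2 * h ≤ s + 1) : 0 ≤ Phi m s h c := by
  obtain ⟨w, hw⟩ : ∃ w, m = 3 + w := ⟨m - 3, by ring⟩
  obtain ⟨u, hu⟩ : ∃ u, s = 5 + 2 * w + u := ⟨s - 5 - 2 * w, by ring⟩
  obtain ⟨v, hv⟩ : ∃ v, h = (s + v) / 2 := ⟨2 * h - s, by ring⟩
  have e1 := Phi_endpoint_neg w u (by linarith) (by linarith)
  have e2 := Phi_endpoint_pos w u (by linarith) (by linarith)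
  rw [← hu, ← hw, show (4 + w) / 2 = (m + 1) / 2 by rw [hw]; ring] at e1 e2
  have hs5 : 5 ≤ s := by linarith
  have hv1 : -1 ≤ v := by linarith
  have hv2 : v ≤ 1 := by linarith
  have e3 : 0 ≤ Phi m s h ((m + 1) / 2) := by
    have : Phi m s h ((m + 1) / 2) = (1 + v) / 2 * Phi m s ((s + 1) / 2) ((m + 1) / 2) +
        (1 - v) / 2 * Phi m s ((s - 1) / 2) ((m + 1) / 2) +
        (m * s ^ 2 + 2 * (2 * m - 1) * s) / 4 * ((1 - v) * (1 + v)) := by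
      rw [hv]; unfold Phi; ring
    rw [this]
    have a1 : 0 ≤ (1 + v) / 2 := by linarith
    have a2 : 0 ≤ (1 - v) / 2 := by linarith
    have a3 : 0 ≤ (m * s ^ 2 + 2 * (2 * m - 1) * s) / 4 := by
      have : 0 ≤ 2 * m - 1 := by linarith
      positivity
    have a4 : 0 ≤ (1 - v) * (1 + v) := mul_nonneg (by linarith) (by linarith)
    positivity
  have e4 : Phi m s h c = Phi m s h ((m + 1) / 2) + ((m + 1) / 2 - c) *
      (h * s ^ 2 + (2 * m - 1) * s * h + (s ^ 4 + 1) / 2 - (c + (m + 1) / 2) * s ^ 2) := by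
    unfold Phi; ring
  rw [e4]
  refine add_nonneg e3 (mul_nonneg (by linarith) ?_)
  have b1 : 0 ≤ h := by linarith
  have b2 : 0 ≤ h * s ^ 2 + (2 * m - 1) * s * h := by
    have : 0 ≤ 2 * m - 1 := by linarith
    positivity
  have b3 : (c + (m + 1) / 2) * s ^ 2 ≤ s ^ 2 / 2 * s ^ 2 := by
    refine mul_le_mul_of_nonneg_right ?_ (by positivity)
    nlinarith
  nlinarith

variable {F : Type} [Field F] [Fintype F]

lemma sum_sub_fin (h D : ℕ) (hD : 2 * h ≤ D + 2) :
    ((∑ i : Fin (2 * h), (D + 1 - i) : ℕ) : ℝ) = 2 * h * (D + 1) - h * (2 * h - 1) := by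
  have key : ∀ k : ℕ, k ≤ D + 2 → ((∑ i ∈ Finset.range k, (D + 1 - i) : ℕ) : ℝ) =
      k * (D + 1) - k * (k - 1) / 2 := by
    intro k
    induction k with
    | zero => simp
    | succ k ih =>
      intro hk
      rw [Finset.sum_range_succ, Nat.cast_add, ih (by omega), Nat.cast_sub (by omega)]
      push_cast; ring
  rw [Fin.sum_univ_eq_sum_range (fun i => D + 1 - i), key _ hD]
  push_cast; ring

/-- Counting the zeros of the auxiliary polynomial with multiplicity. -/
lemma zeros_bound (f R : F[X]) (h N : ℕ) (hR : R ≠ 0) (hdeg : R.natDegree ≤ N)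
    (h1 : ∀ x, f.eval x ≠ 0 → IsSquare (f.eval x) → (X - C x) ^ (2 * h) ∣ R)
    (h0 : ∀ x, f.eval x = 0 → (X - C x) ^ h ∣ R) :
    (h : ℤ) * (Fintype.card F + ∑ x, quadraticChar F (f.eval x)) ≤ N := by
  have hsum : ∑ x : F, rootMultiplicity x R ≤ R.natDegree := by
    refine le_trans ?_ (card_roots' R)
    have := Multiset.toFinset_sum_count_eq R.roots
    rw [← this]
    simp only [← count_roots]
    refine (Finset.sum_subset (Finset.subset_univ _) ?_).ge
    intro x _ hx
    rw [Multiset.mem_toFinset] at hx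
    exact Multiset.count_eq_zero.2 hx
  have hx : ∀ x : F, (h : ℤ) * (1 + quadraticChar F (f.eval x)) ≤ rootMultiplicity x R := by
    intro x
    by_cases hx0 : f.eval x = 0
    · rw [hx0, quadraticChar_zero, add_zero, mul_one]
      exact_mod_cast (le_rootMultiplicity_iff hR).2 (h0 x hx0)
    · by_cases hsq : IsSquare (f.eval x)
      · rw [(quadraticChar_one_iff_isSquare hx0).2 hsq]
        have := (le_rootMultiplicity_iff hR).2 (h1 x hx0 hsq)
        push_cast [← Int.ofNat_le] at this ⊢
        linarith
      · rw [quadraticChar_neg_one_iff_not_isSquare.2 hsq]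
        simp
  have h3 : (h : ℤ) * (Fintype.card F + ∑ x, quadraticChar F (f.eval x)) =
      ∑ x : F, (h : ℤ) * (1 + quadraticChar F (f.eval x)) := by
    rw [← Finset.mul_sum, Finset.sum_add_distrib]; simp
  rw [h3]
  refine (Finset.sum_le_sum fun x _ => hx x).trans ?_
  exact_mod_cast hsum.trans hdeg

set_option maxHeartbeats 1000000 in
/-- The upper bound for `deg f ≥ 3` and `2 deg f - 1 < √q`. The parameters are `h ≈ √q / 2`, exponents
`i < (q + 1) / 2` of `x` in `S₁` and `c ≈ m / 2` fewer in `S₂`, to absorb the factor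
`E = f^((q+1)/2)`; `b` is the least exponent of `x^q` for which the unknowns outnumber the
equations. -/
lemma sum_le_large (f : F[X])
    (hns : ∀ (c : F) (r s : F[X]), c ≠ 0 → s ≠ 0 → r ^ 2 ≠ C c * f * s ^ 2)
    (hodd : Odd (Fintype.card F)) (hm3 : 3 ≤ f.natDegree)
    (hs : 2 * (f.natDegree : ℝ) - 1 < √(Fintype.card F)) :
    ((∑ x, quadraticChar F (f.eval x) : ℤ) : ℝ) ≤
      (2 * f.natDegree - 1) * √(Fintype.card F) := by
  set q := Fintype.card F with hq
  set m := f.natDegree with hm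
  set s := √(q : ℝ) with hsd
  have hs2 : s ^ 2 = q := Real.sq_sqrt (Nat.cast_nonneg _)
  have hm3' : (3 : ℝ) ≤ m := by exact_mod_cast hm3
  have hs5 : 5 < s := by linarith
  obtain ⟨A, hA⟩ : ∃ A, q + 1 = 2 * A := by
    obtain ⟨k, hk⟩ := hodd; exact ⟨k + 1, by omega⟩
  have hAr : (A : ℝ) = (s ^ 2 + 1) / 2 := by
    rw [hs2]; have : (q : ℝ) + 1 = 2 * A := by exact_mod_cast hA
    linarith
  obtain ⟨c, hc1, hc2⟩ : ∃ c, m ≤ 2 * c ∧ 2 * c ≤ m + 1 := ⟨(m + 1) / 2, by omega, by omega⟩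
  have hc2' : 2 * (c : ℝ) ≤ m + 1 := by exact_mod_cast hc2
  have hc1' : (m : ℝ) ≤ 2 * c := by exact_mod_cast hc1
  set h := ⌊(s + 1) / 2⌋₊ with hh
  have hh1 : (h : ℝ) ≤ (s + 1) / 2 := Nat.floor_le (by linarith)
  have hh2 : (s + 1) / 2 < h + 1 := Nat.lt_floor_add_one _
  have hmh : m ≤ h := by
    have : (m : ℝ) < h + 1 := by linarith
    have : m < h + 1 := by exact_mod_cast this
    omega
  have hmh' : (m : ℝ) ≤ h := by exact_mod_cast hmh
  have hPhi := Phi_nonneg m s h c hm3' hs.le (by linarith) (by linarith) (by linarith)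
  set co : ℝ := s ^ 2 + 1 - c - 2 * h with hco
  have hco0 : 0 < co := by
    have : 5 * s ≤ s ^ 2 := by rw [sq]; exact mul_le_mul_of_nonneg_right hs5.le (by linarith)
    rw [hco]; linarith
  set rhs : ℝ := c * A - c ^ 2 + 2 * h * (A - 1) - h * (2 * h - 1) + m * (h * (h - 1)) with hrhs
  have hcrhs : c * co ≤ rhs := by
    have e : rhs - c * co = (h - c) * A + h * (A - 1) + h * ((m - 2) * (h - m) + m * (m - 3))
        + 2 * h * c := by
      rw [hrhs, hco, hAr]; ring
    have hA1 : (1 : ℝ) ≤ A := by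
      have : 5 * s ≤ s ^ 2 := by rw [sq]; exact mul_le_mul_of_nonneg_right hs5.le (by linarith)
      rw [hAr]; linarith
    have a1 : 0 ≤ ((h : ℝ) - c) * A := mul_nonneg (by linarith) (by linarith)
    have a2 : 0 ≤ (h : ℝ) * (A - 1) := mul_nonneg (by linarith) (by linarith)
    have a3 : 0 ≤ ((m : ℝ) - 2) * (h - m) := mul_nonneg (by linarith) (by linarith)
    have a4 : 0 ≤ (m : ℝ) * (m - 3) := mul_nonneg (by linarith) (by linarith)
    have a5 : 0 ≤ (h : ℝ) * ((m - 2) * (h - m) + m * (m - 3)) :=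
      mul_nonneg (by linarith) (by linarith)
    have a6 : 0 ≤ 2 * (h : ℝ) * c := by positivity
    linarith
  have hrhs0 : 0 ≤ rhs := le_trans (by positivity) hcrhs
  -- the unknowns outnumber the equations as soon as `rhs < (b + 1) * co`
  set b := ⌊rhs / co⌋₊ with hb
  have hb1 : (b : ℝ) * co ≤ rhs := by
    rw [← le_div_iff₀ hco0]; exact Nat.floor_le (by positivity)
  have hb2 : rhs < (b + 1) * co := by
    rw [← div_lt_iff₀ hco0]; exact Nat.lt_floor_add_one _
  have hcb : c ≤ b := Nat.le_floor (by rw [le_div_iff₀ hco0]; exact hcrhs)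
  have hcA : c ≤ A := by
    have : (c : ℝ) ≤ A := by
      have : 5 * s ≤ s ^ 2 := by rw [sq]; exact mul_le_mul_of_nonneg_right hs5.le (by linarith)
      rw [hAr]; linarith
    exact_mod_cast this
  have hhA : 2 * h ≤ A := by
    have : 2 * (h : ℝ) ≤ A := by
      have : 5 * s ≤ s ^ 2 := by rw [sq]; exact mul_le_mul_of_nonneg_right hs5.le (by linarith)
      rw [hAr]; linarith
    exact_mod_cast this
  have hmA : m * A ≤ c * (q + 1) := by
    rw [hA, ← mul_assoc, mul_comm c 2]; exact Nat.mul_le_mul_right _ hc1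
  have hq2 : (q + 1) / 2 = A := by omega
  have hmq : m < q := by
    have : (m : ℝ) < q := by
      have : 5 * s ≤ s ^ 2 := by rw [sq]; exact mul_le_mul_of_nonneg_right hs5.le (by linarith)
      rw [← hs2]; linarith
    exact_mod_cast this
  obtain ⟨A1, rfl⟩ : ∃ A1, A = A1 + c := ⟨A - c, by omega⟩
  obtain ⟨b1, hbb⟩ : ∃ b1, b = b1 + c := ⟨b - c, by omega⟩
  obtain ⟨R, hR, hdeg, hR1, hR0⟩ := exists_aux f hns hodd (A1 + c) (b + 1) A1 (b1 + 1) h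
    (A1 + c + b - 1) (A1 + c - 1 + q * b) (by omega) (by omega) hmq (by omega) (by omega)
    (by
      intro i hi j hj
      have : q * j ≤ q * b := Nat.mul_le_mul_left _ (by omega)
      rw [← hq]
      omega)
    (by
      intro i hi j hj
      have h1 : q * j ≤ q * b1 := Nat.mul_le_mul_left _ (by omega)
      rw [← hq, hq2, hbb, ← hm]
      have h2 : q * (b1 + c) = q * b1 + q * c := mul_add _ _ _
      have : c * (q + 1) = q * c + c := by ring
      omega)
    (by
      have e := sum_sub_fin h (A1 + c + b - 1) (by omega)
      have h1 : 1 ≤ h := by omega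
      rw [← Nat.cast_lt (α := ℝ), Nat.cast_add, e, Nat.cast_sub (by omega)]
      push_cast [Nat.cast_sub h1]
      have e2 : (b : ℝ) = b1 + c := by exact_mod_cast hbb
      have e3 : (b1 : ℝ) = b - c := by linarith
      have e4 : ((A1 : ℝ) + c) = A1 + c := rfl
      push_cast at hAr
      have e5 : co = 2 * (A1 + c) - c - 2 * h := by rw [hco, hAr]; ring
      rw [e5, hrhs] at hb2
      push_cast at hb2
      rw [e3, ← hm]
      linarith)
  have hz := zeros_bound f R h _ hR hdeg hR1 hR0
  have hz' : (h : ℝ) * (q + ((∑ x, quadraticChar F (f.eval x) : ℤ) : ℝ)) ≤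
      ((A1 + c - 1 + q * b : ℕ) : ℝ) := by exact_mod_cast hz
  rw [Nat.cast_add, Nat.cast_sub (by omega)] at hz'
  push_cast at hz' hAr
  rw [hAr, ← hs2] at hz'
  have hh0 : (0 : ℝ) < h := by linarith
  -- compare with `h * (q + (2 m - 1) s)` after multiplying by `co`
  have hfin : (s ^ 2 + 1) / 2 - 1 + s ^ 2 * b ≤ h * (s ^ 2 + (2 * m - 1) * s) := by
    refine le_of_mul_le_mul_right ?_ hco0
    have e1 : s ^ 2 * (b * co) ≤ s ^ 2 * rhs := mul_le_mul_of_nonneg_left hb1 (by positivity)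
    have e2 : Phi m s h c = h * (s ^ 2 + (2 * m - 1) * s) * co - ((s ^ 2 + 1) / 2 - 1) * co
        - s ^ 2 * rhs := by
      rw [hrhs]; push_cast; rw [hAr, hco]; unfold Phi; ring
    linarith
  have := le_of_mul_le_mul_left (hz'.trans hfin) hh0
  push_cast at this ⊢
  linarith

end Stepanov

namespace Stepanov

variable {F : Type} [Field F] [Fintype F]

lemma ringChar_ne_two (hodd : Odd (Fintype.card F)) : ringChar F ≠ 2 := by
  intro hc
  have := FiniteField.even_card_iff_char_two.1 hc
  obtain ⟨k, hk⟩ := hodd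
  omega

lemma abs_quadraticChar_le (a : F) : |quadraticChar F a| ≤ 1 := by
  by_cases ha : a = 0
  · simp [ha]
  · rcases quadraticChar_dichotomy ha with h | h <;> simp [h]

lemma abs_sum_le_card (f : F[X]) :
    |∑ x, quadraticChar F (f.eval x)| ≤ Fintype.card F := by
  refine (Finset.abs_sum_le_sum_abs _ _).trans ?_
  refine (Finset.sum_le_sum fun x _ => abs_quadraticChar_le _).trans ?_
  simp

lemma sum_linear (hodd : Odd (Fintype.card F)) (a b : F) (ha : a ≠ 0) :
    ∑ x, quadraticChar F (a * x + b) = 0 := by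
  rw [← quadraticChar_sum_zero (ringChar_ne_two hodd)]
  exact Fintype.sum_bijective (fun x => a * x + b)
    ((Equiv.mulLeft₀ a ha).trans (Equiv.addRight b)).bijective _ _ (fun _ => rfl)

/-- Counting square roots of `z = y²` turns the sum into a Jacobi sum. -/
lemma sum_sq_sub (hodd : Odd (Fintype.card F)) (d : F) (hd : d ≠ 0) :
    ∑ y, quadraticChar F (y ^ 2 - d) = -1 := by
  have hc := ringChar_ne_two hodd
  have h1 : ∑ y, quadraticChar F (y ^ 2 - d) =
      ∑ z, (quadraticChar F z + 1) * quadraticChar F (z - d) := by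
    rw [← Finset.sum_fiberwise (s := Finset.univ) (g := fun y : F => y ^ 2)]
    refine Finset.sum_congr rfl fun z _ => ?_
    rw [← quadraticChar_card_sqrts hc z, Finset.sum_congr rfl
      (g := fun _ => quadraticChar F (z - d))]
    · rw [Finset.sum_const, nsmul_eq_mul]
      congr 3
      ext y; simp
    · intro y hy
      rw [(Finset.mem_filter.1 hy).2]
  have h2 : ∑ z, quadraticChar F (z - d) = 0 := by
    have := sum_linear hodd 1 (-d) one_ne_zero
    simpa [sub_eq_add_neg] using this
  have h3 : ∑ z, quadraticChar F z * quadraticChar F (z - d) =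
      quadraticChar F (-1) * jacobiSum (quadraticChar F) (quadraticChar F)⁻¹ := by
    rw [(quadraticChar_isQuadratic F).inv, jacobiSum, Finset.mul_sum]
    refine (Fintype.sum_bijective (fun x => d * x) (Equiv.mulLeft₀ d hd).bijective _ _ ?_).symm
    intro x
    rw [show d * x - d = (-1) * (d * (1 - x)) by ring, map_mul, map_mul, map_mul]
    have : quadraticChar F d * quadraticChar F d = 1 := by
      rw [← sq]; exact quadraticChar_sq_one hd
    linear_combination (-(quadraticChar F (-1) * quadraticChar F x * quadraticChar F (1 - x))) * this
  rw [h1]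
  simp only [add_mul, one_mul, Finset.sum_add_distrib]
  rw [h2, h3, jacobiSum_nontrivial_inv (quadraticChar_ne_one hc), add_zero, mul_neg, ← sq,
    quadraticChar_sq_one (by simp)]

/-- For degree `2`, completing the square. -/
lemma sum_quadratic (f : F[X])
    (hns : ∀ (c : F) (r s : F[X]), c ≠ 0 → s ≠ 0 → r ^ 2 ≠ C c * f * s ^ 2)
    (hodd : Odd (Fintype.card F)) (h2 : f.natDegree = 2) :
    |∑ x, quadraticChar F (f.eval x)| ≤ 1 := by
  have h20 : (2 : F) ≠ 0 := Ring.two_ne_zero (ringChar_ne_two hodd)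
  have h40 : (4 : F) ≠ 0 := by
    have := mul_ne_zero h20 h20
    rwa [show (2 : F) * 2 = 4 by norm_num] at this
  obtain ⟨a, ha, b, c, hf⟩ : ∃ a, a ≠ 0 ∧ ∃ b c, f = C a * X ^ 2 + C b * X + C c := by
    refine ⟨f.coeff 2, ?_, f.coeff 1, f.coeff 0, ?_⟩
    · rw [← h2]
      exact leadingCoeff_ne_zero.2 (by rintro rfl; simp at h2)
    · exact eq_quadratic_of_degree_le_two (natDegree_le_iff_degree_le.1 h2.le)
  have hd : b ^ 2 - 4 * a * c ≠ 0 := by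
    intro hd
    refine hns (4 * a) (C (2 * a) * X + C b) 1 (mul_ne_zero h40 ha) one_ne_zero ?_
    have hd' : (C (b ^ 2) : F[X]) = C (4 * a * c) := by rw [sub_eq_zero.1 hd]
    rw [hf]
    simp only [map_mul, map_pow, map_ofNat] at hd' ⊢
    linear_combination hd'
  have h3 : quadraticChar F (4 * a) * ∑ x, quadraticChar F (f.eval x) = -1 := by
    rw [← sum_sq_sub hodd _ hd, Finset.mul_sum]
    refine Fintype.sum_bijective (fun x => 2 * a * x + b)
      ((Equiv.mulLeft₀ (2 * a) (mul_ne_zero h20 ha)).trans (Equiv.addRight b)).bijective _ _ ?_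
    intro x
    rw [← map_mul, hf]
    congr 1
    simp only [eval_add, eval_mul, eval_pow, eval_C, eval_X]
    ring
  have h4 := congrArg abs h3
  rw [abs_mul, abs_neg, abs_one] at h4
  rcases quadraticChar_dichotomy (mul_ne_zero h40 ha) with h | h <;> rw [h] at h4 <;>
    simp only [abs_neg, abs_one, one_mul] at h4 <;> exact h4.le

lemma sum_le (f : F[X])
    (hns : ∀ (c : F) (r s : F[X]), c ≠ 0 → s ≠ 0 → r ^ 2 ≠ C c * f * s ^ 2)
    (hodd : Odd (Fintype.card F)) (hm : 1 ≤ f.natDegree) :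
    ((∑ x, quadraticChar F (f.eval x) : ℤ) : ℝ) ≤
      (2 * f.natDegree - 1) * √(Fintype.card F) := by
  have hs0 : (0 : ℝ) ≤ √(Fintype.card F) := Real.sqrt_nonneg _
  have hs1 : (1 : ℝ) ≤ √(Fintype.card F) := by
    rw [Real.one_le_sqrt]
    exact_mod_cast Fintype.card_pos (α := F)
  obtain h1 | h2 | h3 : f.natDegree = 1 ∨ f.natDegree = 2 ∨ 3 ≤ f.natDegree := by omega
  · obtain ⟨a, ha, b, hf⟩ := natDegree_eq_one.1 h1
    have : ∑ x, quadraticChar F (f.eval x) = 0 := by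
      rw [← sum_linear hodd a b ha, ← hf]
      simp
    rw [this, h1]
    norm_num
  · have := sum_quadratic f hns hodd h2
    have : ((∑ x, quadraticChar F (f.eval x) : ℤ) : ℝ) ≤ 1 := by
      exact_mod_cast (le_abs_self _).trans this
    rw [h2]
    push_cast at this ⊢
    linarith
  · rcases lt_or_ge (2 * (f.natDegree : ℝ) - 1) √(Fintype.card F) with hs | hs
    · exact sum_le_large f hns hodd h3 hs
    · have h4 : ((∑ x, quadraticChar F (f.eval x) : ℤ) : ℝ) ≤ Fintype.card F := by
        exact_mod_cast (le_abs_self _).trans (abs_sum_le_card f)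
      refine h4.trans ?_
      nth_rewrite 1 [← Real.mul_self_sqrt (Nat.cast_nonneg (Fintype.card F))]
      exact mul_le_mul_of_nonneg_right hs hs0

/-- Weil's theorem for the quadratic character, with constant `2 deg f - 1` in place of `deg f - 1`:
if no nonzero constant multiple of `f` is the square of a rational function, then
`|∑ χ(f(x))| ≤ (2 deg f - 1) √q`. The lower bound is the upper bound for a nonsquare multiple
of `f`. -/
theorem abs_sum_le (f : F[X])
    (hns : ∀ (c : F) (r s : F[X]), c ≠ 0 → s ≠ 0 → r ^ 2 ≠ C c * f * s ^ 2)
    (hodd : Odd (Fintype.card F)) (hm : 1 ≤ f.natDegree) :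
    |((∑ x, quadraticChar F (f.eval x) : ℤ) : ℝ)| ≤
      (2 * f.natDegree - 1) * √(Fintype.card F) := by
  refine abs_le.2 ⟨?_, sum_le f hns hodd hm⟩
  obtain ⟨a, ha⟩ := quadraticChar_exists_neg_one (ringChar_ne_two hodd)
  have ha0 : a ≠ 0 := by rintro rfl; simp at ha
  have h1 := sum_le (C a * f) (by
    intro c r s hc hs
    have := hns (c * a) r s (mul_ne_zero hc ha0) hs
    rwa [C_mul, mul_assoc (C c)] at this) hodd (by rwa [natDegree_C_mul ha0])
  rw [natDegree_C_mul ha0] at h1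
  simp only [eval_mul, eval_C, map_mul, ha, neg_one_mul, Finset.sum_neg_distrib, Int.cast_neg] at h1
  linarith

end Stepanov

/-! ### Discriminants and Pellet's formula -/

namespace Pellet

/-- The Sylvester matrix with rows for `P` first is the transpose of Mathlib's Sylvester matrix,
with rows and columns both listed in reverse order. -/
lemma presultant_eq {R : Type*} [CommRing R] (m n : ℕ) (P Q : R[X]) :
    presultant m n P Q = resultant P Q m n := by
  have h : sylvesterMatrix m n P Q = (sylvester P Q m n).transpose.submatrix
      (Fin.revPerm.trans (finCongr (add_comm n m)))
      (Fin.revPerm.trans (finCongr (add_comm n m))) := by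
    ext i j
    rw [Matrix.submatrix_apply, Matrix.transpose_apply]
    obtain ⟨k, hk⟩ : ∃ k, k = Fin.revPerm.trans (finCongr (add_comm n m)) i := ⟨_, rfl⟩
    have hk' : (k : ℕ) = n + m - (i + 1) := by rw [hk]; simp
    rw [← hk]
    have hj := j.2
    have hi := i.2
    induction k using Fin.addCases with
    | left k =>
      have h3 := k.2
      simp only [Fin.val_castAdd] at hk'
      have h1 : ¬ ((i : ℕ) < n) := by omega
      simp only [sylvesterMatrix, sylvester, Matrix.of_apply, Fin.addCases_left, if_neg h1,
        Set.mem_Icc, Equiv.trans_apply, Fin.revPerm_apply, finCongr_apply, Fin.val_cast,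
        Fin.val_rev]
      refine if_congr (by omega) (congrArg _ (by omega)) rfl
    | right k =>
      have h3 := k.2
      simp only [Fin.val_natAdd] at hk'
      have h1 : (i : ℕ) < n := by omega
      simp only [sylvesterMatrix, sylvester, Matrix.of_apply, Fin.addCases_right, if_pos h1,
        Set.mem_Icc, Equiv.trans_apply, Fin.revPerm_apply, finCongr_apply, Fin.val_cast,
        Fin.val_rev]
      refine if_congr (by omega) (congrArg _ (by omega)) rfl
  rw [presultant, h, Matrix.det_submatrix_equiv_self, Matrix.det_transpose, resultant]

/-- For monic `f` the resultant does not depend on the formal degree of the second polynomial. -/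
lemma resultant_of_le {R : Type*} [CommRing R] {f : R[X]} (hf : f.Monic) (g : R[X]) (n : ℕ)
    (hn : g.natDegree ≤ n) : resultant f g f.natDegree n = resultant f g := by
  obtain ⟨k, rfl⟩ := Nat.exists_eq_add_of_le hn
  rw [resultant_add_right_deg _ _ _ _ _ le_rfl, coeff_natDegree, hf.leadingCoeff, one_pow, one_mul]

lemma resultant_mul_right' {R : Type*} [CommRing R] {f : R[X]} (hf : f.Monic) (g h : R[X]) :
    resultant f (g * h) = resultant f g * resultant f h := by
  rw [← resultant_mul_right f g h _ le_rfl, resultant_of_le hf _ _ natDegree_mul_le]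

lemma pdisc_eq {R : Type*} [CommRing R] {f : R[X]} (hf : f.Monic) :
    pdisc f = (-1) ^ (f.natDegree * (f.natDegree - 1) / 2) * resultant f (derivative f) := by
  rw [pdisc, presultant_eq, resultant_of_le hf _ _ (natDegree_derivative_le f)]

lemma add_choose_two (m n : ℕ) :
    (m + n).choose 2 = m.choose 2 + n.choose 2 + n * m := by
  induction n with
  | zero => simp
  | succ n ih =>
    rw [← add_assoc, Nat.choose_succ_succ' _ 1, Nat.choose_succ_succ' n 1, ih]
    simp only [Nat.choose_one_right]
    ring

/-- The discriminant of a product. -/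
lemma pdisc_mul {R : Type*} [CommRing R] [Nontrivial R] {f g : R[X]} (hf : f.Monic) (hg : g.Monic)
    (hfd : 0 < f.natDegree) (hgd : 0 < g.natDegree) :
    pdisc (f * g) = pdisc f * pdisc g * resultant f g ^ 2 := by
  rw [pdisc_eq hf, pdisc_eq hg, pdisc_eq (hf.mul hg), hf.natDegree_mul hg]
  have h1 : resultant (f * g) (derivative (f * g)) (f.natDegree + g.natDegree) =
      resultant f (derivative (f * g)) * resultant g (derivative (f * g)) :=
    resultant_mul_left f g (derivative (f * g)) _ le_rfl
  have hdf := natDegree_derivative_le f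
  have hdg := natDegree_derivative_le g
  have hA : (derivative f * g).natDegree ≤ f.natDegree + g.natDegree - 1 :=
    natDegree_mul_le.trans (by omega)
  have hB : (f * derivative g).natDegree ≤ f.natDegree + g.natDegree - 1 :=
    natDegree_mul_le.trans (by omega)
  have h2 : resultant f (derivative (f * g)) = resultant f (derivative f) * resultant f g := by
    rw [derivative_mul, ← resultant_mul_right' hf,
      ← resultant_of_le hf _ (f.natDegree + g.natDegree - 1) (natDegree_add_le_of_degree_le hA hB),
      resultant_add_mul_right _ _ _ _ _ (by omega) le_rfl, resultant_of_le hf _ _ hA]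
  have h3 : resultant g (derivative (f * g)) = resultant g (derivative g) * resultant g f := by
    rw [derivative_mul, ← resultant_mul_right' hg,
      ← resultant_of_le hg _ (f.natDegree + g.natDegree - 1) (natDegree_add_le_of_degree_le hA hB),
      add_comm, mul_comm _ g, resultant_add_mul_right _ _ _ _ _ (by omega) le_rfl, mul_comm f,
      resultant_of_le hg _ _ (by rwa [mul_comm] at hB)]
  rw [h1, h2, h3, resultant_comm g f]
  have h4 : (f.natDegree + g.natDegree) * (f.natDegree + g.natDegree - 1) / 2 =
      f.natDegree * (f.natDegree - 1) / 2 + g.natDegree * (g.natDegree - 1) / 2 +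
        g.natDegree * f.natDegree := by
    obtain ⟨a, ha⟩ := Nat.exists_eq_add_of_le' hfd
    obtain ⟨b, hb⟩ := Nat.exists_eq_add_of_le' hgd
    rw [ha, hb, ← Nat.choose_two_right, ← Nat.choose_two_right, ← Nat.choose_two_right,
      add_choose_two]
  rw [h4, pow_add, pow_add]
  have h5 : ((-1 : R) ^ (g.natDegree * f.natDegree)) ^ 2 = 1 := by
    rw [← pow_mul, mul_comm, pow_mul]; simp
  linear_combination ((-1) ^ (f.natDegree * (f.natDegree - 1) / 2) *
    (-1) ^ (g.natDegree * (g.natDegree - 1) / 2) * resultant f (derivative f) *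
    resultant g (derivative g) * resultant f g ^ 2) * h5

/-- The product of all differences of distinct entries is the squared Vandermonde determinant up to
sign. -/
lemma prod_offDiag_eq {K : Type*} [Field K] {d : ℕ} (ρ : Fin d → K) :
    ∏ i, ∏ j ∈ {i}ᶜ, (ρ i - ρ j) = (-1) ^ (d * (d - 1) / 2) * (Matrix.vandermonde ρ).det ^ 2 := by
  have h1 := Finset.prod_prod_Ioi_mul_eq_prod_prod_off_diag (fun i j => ρ j - ρ i)
  rw [← h1, Matrix.det_vandermonde, ← Finset.prod_pow]
  have h2 : ∀ i j : Fin d, (ρ i - ρ j) * (ρ j - ρ i) = (-1) * (ρ j - ρ i) ^ 2 := by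
    intro i j; ring
  simp only [h2, Finset.prod_mul_distrib, Finset.prod_pow, Finset.prod_const, Fin.card_Ioi,
    Finset.prod_pow_eq_pow_sum]
  congr 2
  rw [Fin.sum_univ_eq_sum_range (fun i => d - 1 - i), Finset.sum_range_reflect (fun i => i),
    Finset.sum_range_id]

variable {F : Type} [Field F] [Fintype F]

/-- For irreducible `P` of degree `d`, the discriminant is `δ²` with `δ` the Vandermonde determinant
of the roots. Frobenius permutes the roots in a cycle of length `d`, so `δ^q = (-1)^(d-1) δ`, whence
`χ(disc P) = δ^(q-1) = (-1)^(d-1)`. -/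
lemma quadraticChar_irreducible (hodd : Odd (Fintype.card F)) {P : F[X]} (hP : Irreducible P)
    (hm : P.Monic) : quadraticChar F (pdisc P) = (-1) ^ (P.natDegree - 1) := by
  have : Fact (Irreducible P) := ⟨hP⟩
  set q := Fintype.card F with hq
  set d := P.natDegree with hd
  let L := AdjoinRoot P
  have hfin : Module.Finite F L := (AdjoinRoot.powerBasis hP.ne_zero).finite
  have : Finite L := Module.finite_of_finite F
  let φ : L →ₐ[F] L := FiniteField.frobeniusAlgHom F L
  have hφ : ∀ x, φ x = x ^ q := fun x => rfl
  have hrank : Module.finrank F L = d := by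
    rw [(AdjoinRoot.powerBasis hP.ne_zero).finrank, AdjoinRoot.powerBasis_dim]
  have hord : orderOf φ = d := by
    rw [← hrank]; exact FiniteField.orderOf_frobeniusAlgHom F L
  let α : L := AdjoinRoot.root P
  let ρ : Fin d → L := fun i => (φ ^ (i : ℕ)) α
  have hinj : Function.Injective ρ := by
    intro i j hij
    have h1 : φ ^ (i : ℕ) = φ ^ (j : ℕ) := AdjoinRoot.algHom_ext hij
    refine Fin.ext (pow_injOn_Iio_orderOf ?_ ?_ h1)
    · rw [Set.mem_Iio, hord]; exact i.2
    · rw [Set.mem_Iio, hord]; exact j.2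
  set PL := P.map (algebraMap F L) with hPL
  have hPm : PL.Monic := hm.map _
  have hPd : PL.natDegree = d := natDegree_map _
  have hroot : ∀ i, ρ i ∈ PL.roots := by
    intro i
    rw [mem_roots hPm.ne_zero, IsRoot.def, hPL, eval_map_algebraMap]
    show aeval ((φ ^ (i : ℕ)) α) P = 0
    rw [aeval_algHom_apply]
    have : aeval α P = 0 := by
      rw [AdjoinRoot.aeval_eq, AdjoinRoot.mk_self]
    rw [this, map_zero]
  have hroots : Finset.univ.val.map ρ = PL.roots := by
    refine Multiset.eq_of_le_of_card_le ((Multiset.le_iff_subset ?_).2 ?_) ?_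
    · exact Finset.univ.nodup.map hinj
    · intro x hx
      obtain ⟨i, _, rfl⟩ := Multiset.mem_map.1 hx
      exact hroot i
    · refine (card_roots' _).trans ?_
      simp [hPd]
  have hsplit : PL.Splits := by
    rw [splits_iff_card_roots, ← hroots, hPd]
    simp
  have hdisc : algebraMap F L (pdisc P) = (Matrix.vandermonde ρ).det ^ 2 := by
    have h1 : algebraMap F L (resultant P (derivative P)) =
        ∏ i, ∏ j ∈ {i}ᶜ, (ρ i - ρ j) := by
      have h2 := resultant_eq_prod_eval PL (derivative PL) (PL.natDegree - 1)
        (natDegree_derivative_le _) hsplit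
      rw [hPd] at h2
      rw [← resultant_of_le hm _ _ (natDegree_derivative_le P), ← resultant_map_map,
        ← derivative_map, ← hPL, ← hd, h2, hPm.leadingCoeff, one_pow, one_mul, ← hroots,
        Multiset.map_map]
      show ∏ i, _ = _
      refine Finset.prod_congr rfl fun i _ => ?_
      rw [Function.comp_apply, hsplit.eval_root_derivative hPm (hroot i), ← hroots,
        ← Multiset.map_erase _ hinj, Multiset.map_map]
      show ((Finset.univ.erase i).val.map _).prod = _
      rw [← Finset.compl_singleton]
      rfl
    rw [pdisc_eq hm, map_mul, h1, prod_offDiag_eq, map_pow, map_neg, map_one, ← mul_assoc,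
      ← mul_pow, neg_one_mul, neg_neg, one_pow, one_mul]
  set δ := (Matrix.vandermonde ρ).det with hδ
  have hδ0 : δ ≠ 0 := Matrix.det_vandermonde_ne_zero_iff.2 hinj
  have hd0 : 0 < d := hP.natDegree_pos
  have hfrob : δ ^ q = (-1) ^ (d - 1) * δ := by
    have h1 : (φ : L →+* L).mapMatrix (Matrix.vandermonde ρ) =
        (Matrix.vandermonde ρ).submatrix (finRotate d) id := by
      ext i j
      simp only [RingHom.mapMatrix_apply, Matrix.map_apply, Matrix.vandermonde_apply,
        Matrix.submatrix_apply, id, map_pow]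
      congr 1
      show φ ((φ ^ (i : ℕ)) α) = (φ ^ ((finRotate d i : Fin d) : ℕ)) α
      rw [← AlgHom.mul_apply, ← pow_succ']
      congr 1
      have h3 : ((finRotate d i : Fin d) : ℕ) = (i + 1) % d := by
        obtain ⟨k, hk⟩ : ∃ k, d = k + 1 := ⟨d - 1, by omega⟩
        clear_value d
        subst hk
        rw [finRotate_apply, Fin.val_add]
        simp [Nat.add_mod]
      have h4 : ∀ k : ℕ, φ ^ (k % d) = φ ^ k := fun k => by rw [← hord, pow_mod_orderOf]
      rw [h3, h4]
    rw [← hφ]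
    have h2 : φ δ = ((φ : L →+* L).mapMatrix (Matrix.vandermonde ρ)).det := by
      rw [← RingHom.map_det]; rfl
    rw [h2, h1, Matrix.det_permute, sign_finRotate]
    push_cast
    rfl
  have hpow : algebraMap F L (pdisc P ^ (q / 2)) = (-1) ^ (d - 1) := by
    have h2 : 2 * (q / 2) + 1 = q := by
      obtain ⟨k, hk⟩ := hodd; omega
    rw [map_pow, hdisc, ← pow_mul]
    refine mul_right_cancel₀ hδ0 ?_
    rw [← pow_succ, h2, hfrob]
  have hc := Stepanov.ringChar_ne_two hodd
  rw [hq, ← quadraticChar_eq_pow_of_char_ne_two' hc] at hpow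
  have hpow' : ((quadraticChar F (pdisc P) : ℤ) : F) = ((-1) ^ (d - 1) : ℤ) := by
    apply (algebraMap F L).injective
    rw [hpow]; push_cast; rfl
  have h2 : (2 : F) ≠ 0 := Ring.two_ne_zero hc
  have hneg : (1 : F) ≠ -1 := by
    intro h; exact h2 (by linear_combination h)
  have hne : pdisc P ≠ 0 := by
    intro h0
    rw [h0, map_zero] at hdisc
    exact hδ0 (pow_eq_zero_iff two_ne_zero |>.1 hdisc.symm)
  rcases quadraticChar_dichotomy hne with h | h <;>
    rcases neg_one_pow_eq_or ℤ (d - 1) with h' | h' <;>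
    rw [h, h'] at hpow' ⊢ <;> push_cast at hpow'
  · exact absurd hpow' hneg
  · exact absurd hpow'.symm hneg

end Pellet

namespace Pellet

variable {F : Type} [Field F]

lemma pdisc_one : pdisc (1 : F[X]) = 1 := by
  rw [pdisc_eq monic_one]
  simp

variable [Fintype F]

/-- Pellet's formula for a squarefree product of monic irreducible polynomials. By `pdisc_mul`, the
character of the discriminant is multiplicative on coprime factors. -/
lemma quadraticChar_prod (hodd : Odd (Fintype.card F)) (s : Multiset F[X])
    (hs : ∀ P ∈ s, Irreducible P ∧ P.Monic) (hsq : Squarefree s.prod) :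
    quadraticChar F (pdisc s.prod) = (-1) ^ s.prod.natDegree * (-1) ^ s.card := by
  induction s using Multiset.induction with
  | empty => simp [pdisc_one]
  | cons P s ih =>
    have hP := hs P (Multiset.mem_cons_self P s)
    have hs' : ∀ Q ∈ s, Irreducible Q ∧ Q.Monic := fun Q hQ => hs Q (Multiset.mem_cons_of_mem hQ)
    have hm : s.prod.Monic := by
      have := monic_multiset_prod_of_monic s id (fun Q hQ => (hs' Q hQ).2)
      rwa [Multiset.map_id] at this
    rw [Multiset.prod_cons] at hsq ⊢
    have ih' := ih hs' (hsq.squarefree_of_dvd (dvd_mul_left _ _))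
    have hd := hP.1.natDegree_pos
    have hPd : (-1 : ℤ) ^ (P.natDegree - 1) = - (-1) ^ P.natDegree := by
      obtain ⟨k, hk⟩ := Nat.exists_eq_add_of_le' hd
      rw [hk, Nat.add_sub_cancel, pow_succ]; ring
    have hirr := quadraticChar_irreducible hodd hP.1 hP.2
    rw [hPd] at hirr
    rcases Nat.eq_zero_or_pos s.prod.natDegree with h0 | h0
    · have h1 := hm.natDegree_eq_zero.1 h0
      rw [h1, mul_one, Multiset.card_cons, pow_succ, hirr]
      rw [h1, pdisc_one, natDegree_one, map_one, pow_zero, one_mul] at ih'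
      rw [← ih']; ring
    · have hco : IsCoprime P s.prod := by
        rw [hP.1.coprime_iff_not_dvd]
        rintro ⟨c, hc⟩
        exact hP.1.not_isUnit (hsq P ⟨c, by rw [hc]; ring⟩)
      rw [pdisc_mul hP.2 hm hd h0, map_mul, map_mul, map_pow,
        quadraticChar_sq_one (resultant_ne_zero _ _ hco), ih', hirr,
        hP.2.natDegree_mul hm, Multiset.card_cons, pow_add, pow_succ]
      ring

/-- **Pellet's formula**: for monic `g` over a finite field of odd order,
`μ(g) = (-1)^(deg g) χ(disc g)`. -/
theorem polyMoebius_eq (hodd : Odd (Fintype.card F)) {g : F[X]} (hg : g.Monic) :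
    polyMoebius g = (-1) ^ g.natDegree * quadraticChar F (pdisc g) := by
  rw [polyMoebius]
  split_ifs with hsq
  · have hprod : (UniqueFactorizationMonoid.normalizedFactors g).prod = g := by
      rw [UniqueFactorizationMonoid.prod_normalizedFactors_eq hg.ne_zero, hg.normalize_eq_self]
    have h := quadraticChar_prod hodd (UniqueFactorizationMonoid.normalizedFactors g)
      (fun P hP => ⟨UniqueFactorizationMonoid.irreducible_of_normalized_factor P hP, by
        have h1 := UniqueFactorizationMonoid.normalize_normalized_factor P hP
        rw [← h1]
        exact monic_normalize
          (UniqueFactorizationMonoid.irreducible_of_normalized_factor P hP).ne_zero⟩)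
      (by rwa [hprod])
    rw [hprod] at h
    rw [h, ← mul_assoc, ← pow_add, Even.neg_one_pow (Even.add_self _), one_mul]
  · have h1 : pdisc g = 0 := by
      rw [pdisc_eq hg]
      rw [← PerfectField.separable_iff_squarefree, Separable] at hsq
      rw [mul_eq_zero]
      right
      rw [resultant_eq_zero_iff]
      exact ⟨Or.inl hg.ne_zero, hsq⟩
    rw [h1, quadraticChar_zero, mul_zero]

end Pellet

/-! ### The discriminant as a polynomial in the constant term -/

namespace Autocorr

open Pellet

lemma map_pdisc {R S : Type*} [CommRing R] [CommRing S] [Nontrivial R] [Nontrivial S]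
    (φ : R →+* S) {G : R[X]} (hG : G.Monic) : φ (pdisc G) = pdisc (G.map φ) := by
  rw [pdisc, pdisc, hG.natDegree_map, presultant_eq, presultant_eq, derivative_map,
    resultant_map_map, map_mul, map_pow, map_neg, map_one]

variable {F : Type} [Field F]

lemma monic_family {g : F[X]} (hg : g.Monic) (hd : 0 < g.natDegree) :
    (g.map C + C X : F[X][X]).Monic := by
  refine (hg.map C).add_of_left ?_
  rw [degree_eq_natDegree (hg.map C).ne_zero, hg.natDegree_map]
  exact degree_C_le.trans_lt (by exact_mod_cast hd)

/-- Specialising the discriminant `D_g(t)` at `t = b` gives the discriminant of `g + b`. -/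
lemma eval_Dpoly {g : F[X]} (hg : g.Monic) (hd : 0 < g.natDegree) (b : F) :
    (Dpoly g).eval b = pdisc (g + C b) := by
  have h := map_pdisc (evalRingHom b) (monic_family hg hd)
  rw [coe_evalRingHom] at h
  rw [Dpoly, h]
  congr 1
  rw [Polynomial.map_add, map_map, map_C, coe_evalRingHom, eval_X]
  congr 1
  have h2 : (evalRingHom b).comp C = RingHom.id F := by ext; simp
  rw [h2, map_id]

/-- In the Sylvester matrix defining `D_g`, the variable `t` occurs only in the rows built from
`g + t`, of which there are `deg g - 1`, and linearly there. -/
lemma natDegree_Dpoly_le {g : F[X]} (hg : g.Monic) :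
    (Dpoly g).natDegree ≤ g.natDegree - 1 := by
  have hG : (g.map C + C X : F[X][X]).natDegree = g.natDegree := by
    rw [natDegree_add_C, hg.natDegree_map]
  rw [Dpoly, pdisc, hG]
  have h1 : ((-1 : F[X]) ^ (g.natDegree * (g.natDegree - 1) / 2)) =
      C ((-1) ^ (g.natDegree * (g.natDegree - 1) / 2)) := by simp
  rw [h1]
  refine (natDegree_C_mul_le _ _).trans ?_
  rw [presultant, Matrix.det_apply]
  refine natDegree_sum_le_of_forall_le _ _ fun σ _ => ?_
  refine (natDegree_smul_le _ _).trans ?_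
  refine (natDegree_prod_le _ _).trans ?_
  have hrow : ∀ k l : Fin (g.natDegree - 1 + g.natDegree), (sylvesterMatrix g.natDegree (g.natDegree - 1) (g.map C + C X)
      (derivative (g.map C + C X)) k l).natDegree ≤ if (k : ℕ) < g.natDegree - 1 then 1 else 0 := by
    intro k l
    rw [sylvesterMatrix, Matrix.of_apply]
    split_ifs
    · rw [coeff_add, coeff_map, coeff_C]
      refine natDegree_add_le_of_degree_le (by simp) ?_
      split_ifs <;> simp
    · simp
    · rw [derivative_add, derivative_C, add_zero, derivative_map, coeff_map]
      simp
    · simp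
  refine (Finset.sum_le_sum fun k _ => hrow (σ k) k).trans ?_
  rw [Equiv.sum_comp σ fun k => if (k : ℕ) < g.natDegree - 1 then 1 else 0, Fin.sum_univ_add]
  simp

lemma natDegree_fPoly_add {n : ℕ} (hn : 0 < n) (a : Fin (n - 1) → F) {α : F[X]}
    (hα : α.degree < n) : (fPoly n a + α).Monic ∧ (fPoly n a + α).natDegree = n := by
  have h1 : (∑ i : Fin (n - 1), C (a i) * X ^ ((i : ℕ) + 1) + α).degree < n := by
    refine (degree_add_le _ _).trans_lt (max_lt ?_ hα)
    refine (degree_sum_le _ _).trans_lt ?_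
    refine (Finset.sup_lt_iff (WithBot.bot_lt_coe n)).2 ?_
    intro i _
    refine (degree_C_mul_X_pow_le _ _).trans_lt ?_
    have := i.2
    exact Nat.cast_lt.2 (by omega)
  rw [fPoly, add_assoc]
  refine ⟨monic_X_pow_add h1, natDegree_eq_of_degree_eq_some ?_⟩
  rw [degree_add_eq_left_of_degree_lt (by rwa [degree_X_pow]), degree_X_pow]

/-- If `D` has positive degree, is squarefree and is coprime to `W`, then no nonzero constant
multiple of `D * W` is the square of a rational function: an irreducible factor of `D` occurs in
`D * W` to exact order one. -/
lemma not_square {D W : F[X]} (hd : 0 < D.natDegree) (hsq : Squarefree D) (hco : IsCoprime D W)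
    (hW : W ≠ 0) (c : F) (r s : F[X]) (hc : c ≠ 0) (hs : s ≠ 0) :
    r ^ 2 ≠ C c * (D * W) * s ^ 2 := by
  intro h
  have hD : D ≠ 0 := hsq.ne_zero
  have hDu : ¬ IsUnit D := fun hu => by
    rw [natDegree_eq_zero_of_isUnit hu] at hd; exact lt_irrefl _ hd
  obtain ⟨p, hp, hpD⟩ := WfDvdMonoid.exists_irreducible_factor hDu hD
  have hpp := hp.prime
  have hC : C c ≠ 0 := C_ne_zero.2 hc
  have hR : C c * (D * W) * s ^ 2 ≠ 0 := by positivity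
  have hr : r ^ 2 ≠ 0 := h ▸ hR
  have h1 := congrArg (multiplicity p) h
  have fin : ∀ {x : F[X]}, x ≠ 0 → FiniteMultiplicity p x := fun hx =>
    FiniteMultiplicity.of_prime_left hpp hx
  have e1 : multiplicity p (C c) = 0 := by
    rw [multiplicity_eq_zero]
    exact fun hdvd => hp.not_isUnit (isUnit_of_dvd_unit hdvd (isUnit_C.2 hc.isUnit))
  have e2 : multiplicity p W = 0 := by
    rw [multiplicity_eq_zero]
    exact fun hdvd => hp.not_isUnit (hco.isUnit_of_dvd' hpD hdvd)
  have e3 : multiplicity p D = 1 := by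
    refine multiplicity_eq_of_dvd_of_not_dvd (by rwa [pow_one]) fun hdvd => ?_
    rw [one_add_one_eq_two, pow_two] at hdvd
    exact hp.not_isUnit (hsq p hdvd)
  have hr0 : r ≠ 0 := fun h0 => hr (by rw [h0]; simp)
  rw [(fin hr0).multiplicity_pow hpp, multiplicity_mul hpp (fin hR),
    multiplicity_mul hpp (fin (left_ne_zero_of_mul hR)),
    multiplicity_mul hpp (fin (mul_ne_zero hD hW)), (fin hs).multiplicity_pow hpp, e1, e2, e3] at h1
  omega

end Autocorr

/-! ### The autocorrelation sum -/

namespace Autocorr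

variable {F : Type} [Field F] [Fintype F]

/-- The sum over one translation class, for a good vector: the product of characters is
`χ(P) χ(Q)²`, where `P` collects the exponents `1` and `Q` the others. The factor `χ(Q)²` equals `1`
off the zeros of `Q`, and the sum of `χ(P)` is bounded by Weil's theorem, which applies because `D i`
occurs in `P`. -/
lemma abs_sum_prod_le (hodd : Odd (Fintype.card F)) {r d : ℕ} (D : Fin r → F[X]) (ε : Fin r → ℕ)
    (hε : ∀ j, ε j = 1 ∨ ε j = 2) (i : Fin r) (hi : ε i = 1) (hdeg : ∀ j, (D j).natDegree ≤ d)
    (hpos : 0 < (D i).natDegree) (hsq : Squarefree (D i))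
    (hco : ∀ j, j ≠ i → IsCoprime (D i) (D j)) :
    |((∑ b, ∏ j, quadraticChar F ((D j).eval b) ^ ε j : ℤ) : ℝ)| ≤
      (2 * r * (d : ℝ) - 1) * √(Fintype.card F) := by
  have hDi : ¬ IsUnit (D i) := fun hu => by
    rw [natDegree_eq_zero_of_isUnit hu] at hpos; exact lt_irrefl _ hpos
  have hne : ∀ j, D j ≠ 0 := by
    intro j
    by_cases hj : j = i
    · rw [hj]; exact hsq.ne_zero
    · intro h0
      have := hco j hj
      rw [h0, isCoprime_zero_right] at this
      exact hDi this
  let A : Finset (Fin r) := Finset.univ.filter fun j => ε j = 1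
  have hiA : i ∈ A := by simp [A, hi]
  set P := ∏ j ∈ A, D j with hP
  set Q := ∏ j ∈ Aᶜ, D j with hQ
  have hP0 : P ≠ 0 := Finset.prod_ne_zero_iff.2 fun j _ => hne j
  have hQ0 : Q ≠ 0 := Finset.prod_ne_zero_iff.2 fun j _ => hne j
  have hPm : 1 ≤ P.natDegree :=
    hpos.trans_le (natDegree_le_of_dvd (Finset.dvd_prod_of_mem D hiA) hP0)
  have hsum : P.natDegree + Q.natDegree ≤ r * d := by
    rw [← natDegree_mul hP0 hQ0, hP, hQ, Finset.prod_mul_prod_compl]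
    refine (natDegree_prod_le _ _).trans ((Finset.sum_le_sum fun j _ => hdeg j).trans ?_)
    simp
  have hns : ∀ (c : F) (u s : F[X]), c ≠ 0 → s ≠ 0 → u ^ 2 ≠ C c * P * s ^ 2 := by
    intro c u s hc hs
    rw [hP, ← Finset.mul_prod_erase A D hiA]
    refine not_square hpos hsq (IsCoprime.prod_right fun j hj => hco j (Finset.ne_of_mem_erase hj))
      (Finset.prod_ne_zero_iff.2 fun j _ => hne j) c u s hc hs
  have hW := Stepanov.abs_sum_le P hns hodd hPm
  have hterm : ∀ b, ∏ j, quadraticChar F ((D j).eval b) ^ ε j =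
      quadraticChar F (P.eval b) * quadraticChar F (Q.eval b) ^ 2 := by
    intro b
    rw [hP, hQ, eval_prod, eval_prod, map_prod, map_prod, ← Finset.prod_pow,
      ← Finset.prod_mul_prod_compl A]
    congr 1
    · refine Finset.prod_congr rfl fun j hj => ?_
      rw [(Finset.mem_filter.1 hj).2, pow_one]
    · refine Finset.prod_congr rfl fun j hj => ?_
      have h1 : ε j ≠ 1 := fun h => Finset.mem_compl.1 hj (by simp [A, h])
      rw [(hε j).resolve_left h1]
  let Z : Finset F := Finset.univ.filter fun b => Q.eval b = 0
  have hZ : Z.card ≤ Q.natDegree := by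
    refine card_le_degree_of_subset_roots fun b hb => ?_
    exact (mem_roots hQ0).2 (Finset.mem_filter.1 hb).2
  have hsplit : ∑ b, ∏ j, quadraticChar F ((D j).eval b) ^ ε j =
      ∑ b, quadraticChar F (P.eval b) - ∑ b ∈ Z, quadraticChar F (P.eval b) := by
    rw [eq_sub_iff_add_eq, Finset.sum_filter, ← Finset.sum_add_distrib]
    refine Finset.sum_congr rfl fun b _ => ?_
    rw [hterm]
    split_ifs with h
    · rw [h, quadraticChar_zero]; ring
    · rw [quadraticChar_sq_one h]; ring
  have hz : |((∑ b ∈ Z, quadraticChar F (P.eval b) : ℤ) : ℝ)| ≤ Q.natDegree := by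
    have h1 : |∑ b ∈ Z, quadraticChar F (P.eval b)| ≤ (Z.card : ℤ) := by
      refine (Finset.abs_sum_le_sum_abs _ _).trans
        ((Finset.sum_le_sum fun b _ => Stepanov.abs_quadraticChar_le _).trans ?_)
      simp
    have h2 : |∑ b ∈ Z, quadraticChar F (P.eval b)| ≤ (Q.natDegree : ℤ) :=
      h1.trans (by exact_mod_cast hZ)
    exact_mod_cast h2
  have hs1 : 1 ≤ √(Fintype.card F : ℝ) := by
    rw [Real.one_le_sqrt]
    exact_mod_cast Fintype.card_pos
  rw [hsplit, Int.cast_sub]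
  refine (abs_sub _ _).trans ((add_le_add hW hz).trans ?_)
  have h3 : (Q.natDegree : ℝ) ≤ 2 * Q.natDegree * √(Fintype.card F : ℝ) := by
    nlinarith [(Nat.cast_nonneg Q.natDegree : (0 : ℝ) ≤ Q.natDegree)]
  have h4 : (P.natDegree : ℝ) + Q.natDegree ≤ r * d := by exact_mod_cast hsum
  nlinarith

/-- The part of the autocorrelation sum coming from the translation class of the `f_a + b`,
`b ∈ F_q`. -/
def innerSum {n r : ℕ} (α : Fin r → F[X]) (ε : Fin r → ℕ) (a : Fin (n - 1) → F) : ℤ :=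
  ∑ b, ∏ j, polyMoebius (fPoly n a + C b + α j) ^ ε j

lemma Csum_eq {n r : ℕ} (hn : 1 < n) (α : Fin r → F[X]) (ε : Fin r → ℕ) :
    Csum F n r α ε = ∑ a : Fin (n - 1) → F, innerSum α ε a := by
  obtain ⟨k, rfl⟩ := Nat.exists_eq_add_of_le' hn.le
  rw [Csum, monicPolys, Finset.sum_image]
  · simp only [innerSum]
    rw [Finset.sum_comm, ← Fintype.sum_prod_type', ← (Fin.consEquiv fun _ => F).sum_comp]
    refine Finset.sum_congr rfl fun x _ => Finset.prod_congr rfl fun j _ => ?_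
    congr 3
    rw [Fin.sum_univ_succ, fPoly]
    simp only [Fin.consEquiv_apply, Fin.cons_zero, Fin.cons_succ, Fin.val_zero, pow_zero, mul_one,
      Fin.val_succ]
    rw [add_assoc, add_comm (C x.1)]
    rfl
  · intro a _ b _ hab
    funext l
    have h := congrArg (fun p : F[X] => p.coeff l) (add_left_cancel hab)
    simpa [finsetSum_coeff, coeff_C_mul, coeff_X_pow, Fin.ext_iff.symm, Fin.val_inj] using h

lemma abs_polyMoebius_le {K : Type} [Field K] (g : K[X]) : |polyMoebius g| ≤ 1 := by
  rw [polyMoebius]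
  split_ifs
  · rw [abs_neg_one_pow]
  · simp

lemma abs_innerSum_le {n r : ℕ} (α : Fin r → F[X]) (ε : Fin r → ℕ) (a : Fin (n - 1) → F) :
    |innerSum α ε a| ≤ Fintype.card F := by
  refine (Finset.abs_sum_le_sum_abs _ _).trans
    ((Finset.sum_le_sum fun b _ => (?_ : _ ≤ (1 : ℤ))).trans (by simp))
  rw [Finset.abs_prod]
  refine Finset.prod_le_one (fun _ _ => abs_nonneg _) fun j _ => ?_
  rw [abs_pow]
  exact pow_le_one₀ (abs_nonneg _) (abs_polyMoebius_le _)

/-- By Pellet's formula, the sum over a translation class is a character sum up to sign. -/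
lemma abs_innerSum_eq (hodd : Odd (Fintype.card F)) {n r : ℕ} (hn : 1 < n) (α : Fin r → F[X])
    (hdeg : ∀ j, (α j).degree < n) (ε : Fin r → ℕ) (a : Fin (n - 1) → F) :
    |innerSum α ε a| =
      |∑ b, ∏ j, quadraticChar F ((Dpoly (fPoly n a + α j)).eval b) ^ ε j| := by
  have h1 : ∀ b j, polyMoebius (fPoly n a + C b + α j) =
      (-1) ^ n * quadraticChar F ((Dpoly (fPoly n a + α j)).eval b) := by
    intro b j
    obtain ⟨hm, hd⟩ := natDegree_fPoly_add (by omega) a (hdeg j)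
    have hd0 : 0 < (fPoly n a + α j).natDegree := by omega
    have hm' : (fPoly n a + α j + C b).Monic := by
      refine hm.add_of_left (degree_C_le.trans_lt ?_)
      rw [degree_eq_natDegree hm.ne_zero]
      exact_mod_cast hd0
    rw [eval_Dpoly hm hd0, add_right_comm, Pellet.polyMoebius_eq hodd hm', natDegree_add_C, hd]
  simp only [innerSum, h1, mul_pow, Finset.prod_mul_distrib, ← Finset.mul_sum]
  rw [abs_mul, Finset.abs_prod]
  simp

end Autocorr

/-- Bounding the autocorrelation sum via Weil's theorem:
`|C(α_1,…,α_r;n)| ≤ (2r(n-1) - 1) q^{n-1/2} + q ⬝ #G_n^c`. -/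
theorem Csum_le_of_good_bad (q n r : ℕ) (hq : Odd q) (hn : 1 < n) (hr : 1 < r)
    (F : Type) [Field F] [Fintype F] (hF : Fintype.card F = q)
    (α : Fin r → Polynomial F) (hα : Function.Injective α)
    (hdeg : ∀ j, (α j).degree < n)
    (ε : Fin r → ℕ) (hε : ∀ j, ε j = 1 ∨ ε j = 2) (hε2 : ¬ ∀ j, ε j = 2)
    (i : Fin r) (hi : ε i = 1) :
    |(Csum F n r α ε : ℝ)| ≤
      (2 * r * ((n : ℝ) - 1) - 1) * (q : ℝ) ^ ((n : ℝ) - 1 / 2) +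
        q * ((Finset.univ \ goodSet F n r α i).card : ℝ) := by
  subst hF
  have hn' : ((n - 1 : ℕ) : ℝ) = (n : ℝ) - 1 := by rw [Nat.cast_sub hn.le, Nat.cast_one]
  have hgood : ∀ a ∈ goodSet F n r α i, |(Autocorr.innerSum α ε a : ℝ)| ≤
      (2 * r * ((n : ℝ) - 1) - 1) * √(Fintype.card F) := by
    intro a ha
    obtain ⟨hpos, hsq, hco⟩ := (Finset.mem_filter.1 ha).2
    rw [← Int.cast_abs, Autocorr.abs_innerSum_eq hq hn α hdeg ε a, Int.cast_abs, ← hn']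
    refine Autocorr.abs_sum_prod_le hq (fun j => Dpoly (fPoly n a + α j)) ε hε i hi (fun j => ?_)
      hpos hsq hco
    obtain ⟨hm, hd⟩ := Autocorr.natDegree_fPoly_add (by omega) a (hdeg j)
    exact (Autocorr.natDegree_Dpoly_le hm).trans_eq (by rw [hd])
  have hbad : ∀ a ∈ Finset.univ \ goodSet F n r α i, |(Autocorr.innerSum α ε a : ℝ)| ≤
      Fintype.card F := by
    intro a _
    exact_mod_cast Autocorr.abs_innerSum_le α ε a
  have hcoef : 0 ≤ 2 * r * ((n : ℝ) - 1) - 1 := by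
    have h1 : (2 : ℝ) ≤ r := by exact_mod_cast hr
    have h2 : (2 : ℝ) ≤ n := by exact_mod_cast hn
    nlinarith
  have hpow : (Fintype.card F : ℝ) ^ ((n : ℝ) - 1 / 2) =
      (Fintype.card F : ℝ) ^ (n - 1) * √(Fintype.card F) := by
    have h0 : (0 : ℝ) < Fintype.card F := by exact_mod_cast Fintype.card_pos
    rw [Real.sqrt_eq_rpow, ← Real.rpow_natCast, ← Real.rpow_add h0, hn']
    congr 1; ring
  have hcard : ((goodSet F n r α i).card : ℝ) ≤ (Fintype.card F : ℝ) ^ (n - 1) := by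
    have h1 : (goodSet F n r α i).card ≤ Fintype.card F ^ (n - 1) := by
      refine (Finset.card_le_univ _).trans_eq ?_
      simp
    exact_mod_cast h1
  rw [Autocorr.Csum_eq hn, Int.cast_sum]
  refine (Finset.abs_sum_le_sum_abs _ _).trans ?_
  rw [← Finset.sum_sdiff (Finset.subset_univ (goodSet F n r α i)), add_comm]
  refine add_le_add ((Finset.sum_le_sum hgood).trans ?_) ((Finset.sum_le_sum hbad).trans_eq ?_)
  · rw [Finset.sum_const, nsmul_eq_mul, hpow, mul_left_comm]
    gcongr
  · rw [Finset.sum_const, nsmul_eq_mul, mul_comm]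
end
end

section
/- Let q be an odd prime power, n > 1, r > 1, let α_1, …, α_r ∈ F_q[x] be distinct with deg α_j < n, and fix an index i ∈ {1,…,r}. Then #G_n^c ≤ 3rn²·q^{n−2}. -/
/-!
Write `f_a = f_{(0, b)} + s x` with `s = a_1` and `b = (a_2, …, a_{n-1})`, fix `b`, and put
`g_j = f_{(0, b)} + α_j`. The proof bounds the number of bad `s` on each of these `q^{n-2}` lines.

Suppose first that no `g_j''` vanishes identically. Let `s` be an indeterminate and work over a
separable closure of `F_q(s)`, to which the derivation `d/ds` extends. A critical point `ρ` of
`g_j + s x` satisfies `g_j'(ρ) = -s`, so it is transcendental over `F_q`; hence `g_j''(ρ) ≠ 0` and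
all critical points are simple. The critical value `v = g_j(ρ) + s ρ` satisfies `dv/ds = ρ`, so it
determines `ρ` (`crit_eq_of_value_eq`). As `D_g(t)` is, up to a constant, the product of `t + g(ρ)`
over the critical points `ρ` of `g` (`Dpoly_eq_prod`), the polynomial `D_{g_i + s x}(t)` is
separable. If it had a common root with `D_{g_j + s x}(t)` for some `j ≠ i`, the two critical values
would come from one `ρ`, and `g_i(ρ) = g_j(ρ)` would make `ρ` algebraic over `F_q`.

So the resultants in `t` of `D_{g_i + s x}(t)` with its derivative and with the other
`D_{g_j + s x}(t)` are nonzero polynomials in `s`. Since `D_{g + s x}(t)` has degree at most `n` in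
`s` (`coeffDegLE_Dpoly`) and at most `n - 1` in `t`, each of these `r` resultants has degree at most
`2 n (n - 1)`, and every bad `s` is a zero of one of them (`card_bad_pencil_le`).

Finally, `g_j'' = 0` forces the coefficient of `x²` in `g_j` to vanish, as the characteristic is
odd. This fixes `a_2` for given `j`, so at most `r q^{n-3}` lines are exceptional
(`card_exceptional_le`), and none if `n = 2`. The total is at most
`q^{n-2} · 2 r n (n - 1) + r q^{n-2} ≤ 3 r n² q^{n-2}`.
-/

open Polynomial

noncomputable section
open scoped Classical

/-! ### The resultant and the product formula for the discriminant -/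

/-- `sylvesterMatrix` is the transpose of Mathlib's `sylvester` with rows and columns reversed. -/
theorem presultant_eq {R : Type*} [CommRing R] (m n : ℕ) (P Q : Polynomial R) :
    presultant m n P Q = resultant P Q m n := by
  have hM : sylvesterMatrix m n P Q =
      ((sylvester P Q m n).submatrix (Fin.revPerm.trans (finCongr (add_comm n m)))
        (Fin.revPerm.trans (finCongr (add_comm n m)))).transpose := by
    ext i j
    obtain ⟨k, hk⟩ : ∃ k, k = finCongr (add_comm n m) (Fin.rev i) := ⟨_, rfl⟩
    have hkv : (k : ℕ) = n + m - 1 - i := by rw [hk]; simp [Fin.val_rev]; omega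
    have hi := i.2
    have hj := j.2
    simp only [sylvesterMatrix, sylvester, Matrix.of_apply, Matrix.transpose_apply,
      Matrix.submatrix_apply, Equiv.trans_apply, Fin.revPerm_apply, ← hk]
    induction k using Fin.addCases with
    | left k =>
      simp only [Fin.val_castAdd] at hkv
      have : ¬ (i : ℕ) < n := by omega
      simp only [Fin.addCases_left, this, if_false, Set.mem_Icc, finCongr_apply, Fin.val_cast,
        Fin.val_rev]
      split_ifs <;> first | omega | rfl | (congr 1; omega)
    | right k =>
      simp only [Fin.val_natAdd] at hkv
      have : (i : ℕ) < n := by omega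
      simp only [Fin.addCases_right, this, if_true, Set.mem_Icc, finCongr_apply, Fin.val_cast,
        Fin.val_rev]
      split_ifs <;> first | omega | rfl | (congr 1; omega)
  rw [presultant, hM, Matrix.det_transpose, Matrix.det_submatrix_equiv_self, resultant]

/-- The polynomial `g(x) + t`, as a polynomial in `x` over `R[t]`. -/
def shiftPoly {R : Type*} [CommRing R] (g : R[X]) : R[X][X] := g.map C + C X

theorem shiftPoly_monic {R : Type*} [CommRing R] [Nontrivial R] {n : ℕ} (hn : 1 ≤ n) {g : R[X]}
    (hg : g.Monic) (hd : g.natDegree = n) : (shiftPoly g).Monic ∧ (shiftPoly g).natDegree = n := by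
  have h1 : (C (X : R[X])).degree < (g.map (C : R →+* R[X])).degree := by
    rw [hg.degree_map, degree_eq_natDegree hg.ne_zero, hd, degree_C X_ne_zero]
    exact_mod_cast hn
  refine ⟨(hg.map _).add_of_left h1, ?_⟩
  rw [shiftPoly, natDegree_add_eq_left_of_degree_lt h1, hg.natDegree_map, hd]

theorem derivative_shiftPoly {R : Type*} [CommRing R] (g : R[X]) :
    derivative (shiftPoly g) = (derivative g).map C := by
  simp [shiftPoly, derivative_map]

theorem Dpoly_eq {R : Type*} [CommRing R] [Nontrivial R] {n : ℕ} (hn : 1 ≤ n) {g : R[X]}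
    (hg : g.Monic) (hd : g.natDegree = n) :
    Dpoly g = (-1) ^ (n * (n - 1) / 2) *
      resultant (shiftPoly g) ((derivative g).map C) n (n - 1) := by
  have h := (shiftPoly_monic hn hg hd).2
  rw [← derivative_shiftPoly, ← presultant_eq]
  unfold shiftPoly at *
  rw [Dpoly, pdisc, h]

theorem Dpoly_map {R S : Type*} [CommRing R] [CommRing S] [Nontrivial R] [Nontrivial S] {n : ℕ}
    (hn : 1 ≤ n) {g : R[X]} (hg : g.Monic) (hd : g.natDegree = n) (φ : R →+* S) :
    Dpoly (g.map φ) = (Dpoly g).map φ := by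
  rw [Dpoly_eq hn hg hd, Dpoly_eq hn (hg.map φ) ((hg.natDegree_map φ).trans hd)]
  have h1 : shiftPoly (g.map φ) = (shiftPoly g).map (mapRingHom φ) := by
    simp only [shiftPoly, Polynomial.map_add, Polynomial.map_map, map_C, coe_mapRingHom, map_X]
    congr 2
    ext; simp
  have h2 : (derivative (g.map φ)).map C = ((derivative g).map C).map (mapRingHom φ) := by
    rw [derivative_map, Polynomial.map_map, Polynomial.map_map]
    congr 1
    ext; simp
  rw [h1, h2, resultant_map_map]
  simp

/-- Subtracting `x (g + t)'` from `g + t` does not change the resultant with `(g + t)'`. When `g`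
has a variable coefficient of `x`, this removes it from the first argument. -/
theorem Dpoly_eq' {R : Type*} [CommRing R] [Nontrivial R] {n : ℕ} (hn : 1 ≤ n) {g : R[X]}
    (hg : g.Monic) (hd : g.natDegree = n) :
    Dpoly g = (-1) ^ (n * (n - 1) / 2) *
      resultant (shiftPoly (g - X * derivative g)) ((derivative g).map C) n (n - 1) := by
  have hdeg : ((derivative g).map (C : R →+* R[X])).natDegree ≤ n - 1 :=
    natDegree_map_le.trans ((natDegree_derivative_le g).trans (by omega))
  rw [Dpoly_eq hn hg hd, ← resultant_add_mul_left (shiftPoly g) _ (-X) n (n - 1) _ hdeg]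
  · congr 2
    simp only [shiftPoly, Polynomial.map_sub, Polynomial.map_mul, map_X]
    ring
  · rw [natDegree_neg, natDegree_X]
    omega

/-- Over a field in which `g'` splits, `D_g(t)` is a nonzero constant times the product of
`t + g(ρ)` over the critical points `ρ` of `g`. -/
theorem Dpoly_eq_prod {L : Type*} [Field L] {n : ℕ} (hn : 1 ≤ n) {g : L[X]}
    (hg : g.Monic) (hd : g.natDegree = n) (h0 : derivative g ≠ 0) (hs : (derivative g).Splits) :
    ∃ c : L, c ≠ 0 ∧
      Dpoly g = C c * ((derivative g).roots.map fun ρ => X + C (g.eval ρ)).prod := by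
  obtain ⟨hm, hnd⟩ := shiftPoly_monic hn hg hd
  set P := shiftPoly g with hP
  set Q := (derivative g).map (C : L →+* L[X]) with hQ
  have hQd : Q.natDegree = (derivative g).natDegree := natDegree_map_eq_of_injective C_injective _
  have hle : (derivative g).natDegree ≤ n - 1 := (natDegree_derivative_le g).trans (by omega)
  obtain ⟨k, hk⟩ := Nat.exists_eq_add_of_le hle
  have hres : resultant P Q n (n - 1) = resultant P Q n Q.natDegree := by
    rw [hk, resultant_add_right_deg _ _ _ _ _ hQd.le, hQd, ← hnd, coeff_natDegree,
      hm.leadingCoeff, one_pow, one_mul]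
  have hQs : Q.Splits := hs.map _
  have hroots : Q.roots = (derivative g).roots.map C :=
    hs.roots_map_of_injective C_injective
  have hlc : Q.leadingCoeff = C (derivative g).leadingCoeff :=
    leadingCoeff_map_of_injective C_injective _
  have hprod : (Q.roots.map P.eval).prod
      = ((derivative g).roots.map fun ρ => X + C (g.eval ρ)).prod := by
    rw [hroots, Multiset.map_map]
    congr 1
    refine Multiset.map_congr rfl fun ρ _ => ?_
    simp only [hP, shiftPoly, Function.comp, eval_add, eval_C]
    rw [eval_map, eval₂_at_apply, add_comm]
  refine ⟨(-1) ^ (n * (n - 1) / 2) * ((-1) ^ (n * (derivative g).natDegree) *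
    (derivative g).leadingCoeff ^ n), ?_, ?_⟩
  · have : (derivative g).leadingCoeff ≠ 0 := leadingCoeff_ne_zero.mpr h0
    have h1 : (-1 : L) ≠ 0 := neg_ne_zero.mpr one_ne_zero
    positivity
  · rw [Dpoly_eq hn hg hd, hres, resultant_comm, resultant_eq_prod_eval Q P n hnd.le hQs, hprod,
      hlc, hQd]
    simp only [C_mul, C_pow, C_neg, C_1]
    ring

/-! ### Degrees in `s` and specialization of `s` -/

/-- A polynomial in `t` over `F[s]` all of whose coefficients have degree at most `d` in `s`. -/
def CoeffDegLE {F : Type*} [Field F] (d : ℕ) (p : F[X][X]) : Prop :=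
  ∀ k, (p.coeff k).natDegree ≤ d

namespace CoeffDegLE

variable {F : Type*} [Field F]

theorem mul {d e : ℕ} {p q : F[X][X]} (hp : CoeffDegLE d p) (hq : CoeffDegLE e q) :
    CoeffDegLE (d + e) (p * q) := fun k => by
  rw [coeff_mul]
  exact natDegree_sum_le_of_forall_le _ _ fun x _ =>
    natDegree_mul_le.trans (add_le_add (hp _) (hq _))

theorem prod {ι : Type*} (s : Finset ι) (e : ι → ℕ) (f : ι → F[X][X])
    (h : ∀ i ∈ s, CoeffDegLE (e i) (f i)) : CoeffDegLE (∑ i ∈ s, e i) (∏ i ∈ s, f i) := by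
  induction s using Finset.induction_on with
  | empty =>
    intro k
    simp only [Finset.prod_empty, coeff_one]
    split_ifs <;> simp
  | insert a s ha ih =>
    rw [Finset.prod_insert ha, Finset.sum_insert ha]
    exact (h a (by simp)).mul (ih fun i hi => h i (by simp [hi]))

theorem units_smul {d : ℕ} {p : F[X][X]} (hp : CoeffDegLE d p) (u : ℤˣ) :
    CoeffDegLE d (u • p) := fun k => by
  rcases Int.units_eq_one_or u with rfl | rfl
  · simpa using hp k
  · simpa using hp k

/-- If the entries of the `j`-th column have degree at most `e j` in `s`, then the determinant has
degree at most `∑ j, e j`. -/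
theorem det {ι : Type*} [Fintype ι] [DecidableEq ι] (M : Matrix ι ι F[X][X]) (e : ι → ℕ)
    (h : ∀ i j, CoeffDegLE (e j) (M i j)) : CoeffDegLE (∑ j, e j) M.det := fun k => by
  rw [Matrix.det_apply, finsetSum_coeff]
  exact natDegree_sum_le_of_forall_le _ _ fun σ _ =>
    (prod _ e _ fun i _ => h _ _).units_smul _ k

end CoeffDegLE

theorem CoeffDegLE.derivative {F : Type*} [Field F] {d : ℕ} {p : F[X][X]} (hp : CoeffDegLE d p) :
    CoeffDegLE d (derivative p) := fun k => by
  rw [coeff_derivative]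
  have : ((k : F[X]) + 1).natDegree = 0 := by
    rw [← Nat.cast_succ, natDegree_natCast]
  exact natDegree_mul_le.trans (by rw [this]; exact hp _)

/-- The polynomial `g(x) + s x` with `s` an indeterminate, as a polynomial in `x` over `F[s]`. -/
def pencil {F : Type*} [Field F] (g : F[X]) : F[X][X] := g.map C + C X * X

theorem pencil_map {F : Type*} [Field F] {S : Type*} [CommRing S] (g : F[X]) (φ : F[X] →+* S) :
    (pencil g).map φ = g.map (φ.comp C) + C (φ X) * X := by
  simp [pencil, Polynomial.map_map]

theorem pencil_monic {F : Type*} [Field F] {n : ℕ} (hn : 2 ≤ n) {g : F[X]}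
    (hg : g.Monic) (hd : g.natDegree = n) : (pencil g).Monic ∧ (pencil g).natDegree = n := by
  have h1 : (C X * X : F[X][X]).degree < (g.map (C : F →+* F[X])).degree := by
    rw [hg.degree_map, degree_eq_natDegree hg.ne_zero, hd, degree_C_mul_X X_ne_zero]
    exact_mod_cast hn
  refine ⟨(hg.map _).add_of_left h1, ?_⟩
  rw [pencil, natDegree_add_eq_left_of_degree_lt h1, hg.natDegree_map, hd]

/-- The discriminant `D(s, t)` of `g(x) + s x + t` has degree at most `n` in `s`: in the Sylvester
determinant for `g - x g' + t` and `g' + s`, the indeterminate `s` occurs only in the `n` columns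
of the latter. -/
theorem coeffDegLE_Dpoly {F : Type*} [Field F] {n : ℕ} (hn : 2 ≤ n) {g : F[X]}
    (hg : g.Monic) (hd : g.natDegree = n) : CoeffDegLE n (Dpoly (pencil g)) := by
  obtain ⟨hm, hnd⟩ := pencil_monic hn hg hd
  have h1 : pencil g - X * derivative (pencil g) = (g - X * derivative g).map C := by
    simp [pencil, derivative_map]
    ring
  have hQ : ∀ k, CoeffDegLE 1 (((derivative (pencil g)).map (C : F[X] →+* F[X][X])).coeff k) := by
    intro k l
    have : derivative (pencil g) = (derivative g).map C + C X := by
      simp [pencil, derivative_map]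
    rw [this, coeff_map, coeff_add, coeff_map, coeff_C, coeff_C]
    split_ifs
    · exact natDegree_add_le_of_degree_le (by simp) natDegree_X_le
    · simp
    · simp
  have hP : ∀ k, CoeffDegLE 0
      ((shiftPoly (pencil g - X * derivative (pencil g))).coeff k) := by
    intro k l
    rw [h1, shiftPoly, coeff_add, coeff_map, coeff_map, coeff_C, coeff_add, coeff_C]
    refine natDegree_add_le_of_degree_le ?_ ?_ <;> split_ifs <;>
      simp only [natDegree_C, natDegree_zero, coeff_zero, le_refl, coeff_X]
    split_ifs <;> simp
  have hz : ∀ d, CoeffDegLE d (0 : F[X][X]) := fun d k => by simp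
  have key : CoeffDegLE n (resultant (shiftPoly (pencil g - X * derivative (pencil g)))
      ((derivative (pencil g)).map C) n (n - 1)) := by
    have := CoeffDegLE.det (sylvester (shiftPoly (pencil g - X * derivative (pencil g)))
      ((derivative (pencil g)).map C) n (n - 1))
      (fun j => Fin.addCases (fun _ => 1) (fun _ => 0) j) (fun i j => by
        induction j using Fin.addCases with
        | left j =>
          simp only [sylvester, Matrix.of_apply, Fin.addCases_left]
          split_ifs
          · exact hQ _
          · exact hz _
        | right j =>
          simp only [sylvester, Matrix.of_apply, Fin.addCases_right]
          split_ifs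
          · exact hP _
          · exact hz _)
    simpa [Fin.sum_univ_add, resultant] using this
  rw [Dpoly_eq' (by omega) hm hnd]
  have hs : CoeffDegLE 0 ((-1 : F[X][X]) ^ (n * (n - 1) / 2)) := fun k => by
    rcases neg_one_pow_eq_or F[X][X] (n * (n - 1) / 2) with h | h <;> rw [h] <;>
      simp [coeff_one, apply_ite natDegree]
  simpa using hs.mul key

/-- Let `A, B ∈ F[s][t]` have degree at most `n` in `s` and at most `m` in `t`, and let them be
coprime over some field containing `F[s]`. A specialization of `s` at which they fail to be
coprime is a zero of their resultant in `t`, of which there are at most `2 m n`. -/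
theorem card_not_isCoprime_le {F : Type*} [Field F] [Fintype F] {n m : ℕ} {A B : F[X][X]}
    (hA : CoeffDegLE n A) (hB : CoeffDegLE n B) (hAm : A.natDegree ≤ m) (hBm : B.natDegree ≤ m)
    (hA0 : A.natDegree ≠ 0) {L : Type*} [Field L] (φ : F[X] →+* L) (hφ : Function.Injective φ)
    (hco : IsCoprime (A.map φ) (B.map φ)) :
    (Finset.univ.filter fun s : F =>
      ¬ IsCoprime (A.map (evalRingHom s)) (B.map (evalRingHom s))).card ≤ 2 * m * n := by
  have hR0 : resultant A B ≠ 0 := by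
    intro h
    have := resultant_ne_zero _ _ hco
    rw [natDegree_map_eq_of_injective hφ, natDegree_map_eq_of_injective hφ, resultant_map_map,
      h, map_zero] at this
    exact this rfl
  have hdeg : (resultant A B).natDegree ≤ 2 * m * n := by
    have hentry : ∀ i j, (sylvester A B A.natDegree B.natDegree i j).natDegree ≤ n := by
      intro i j
      induction j using Fin.addCases with
      | left j =>
        simp only [sylvester, Matrix.of_apply, Fin.addCases_left]
        split_ifs
        · exact hB _
        · simp
      | right j =>
        simp only [sylvester, Matrix.of_apply, Fin.addCases_right]
        split_ifs
        · exact hA _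
        · simp
    rw [resultant, Matrix.det_apply]
    refine natDegree_sum_le_of_forall_le _ _ fun σ _ => ?_
    have h1 : (∏ i, sylvester A B A.natDegree B.natDegree (σ i) i).natDegree ≤ 2 * m * n := by
      refine (natDegree_prod_le _ _).trans ((Finset.sum_le_sum fun i _ => hentry _ _).trans ?_)
      simp only [Finset.sum_const, Finset.card_univ, Fintype.card_fin, smul_eq_mul]
      exact Nat.mul_le_mul_right _ (by omega)
    rcases Int.units_eq_one_or (Equiv.Perm.sign σ) with h | h <;> rw [h] <;> simpa using h1
  refine le_trans ?_ ((card_roots' _).trans hdeg)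
  refine le_trans (Finset.card_le_card fun s hs => ?_) (Multiset.toFinset_card_le _)
  rw [Finset.mem_filter] at hs
  rw [Multiset.mem_toFinset, mem_roots hR0, IsRoot.def]
  by_contra hne
  obtain ⟨p, q, -, -, h⟩ := exists_mul_add_mul_eq_C_resultant A B le_rfl le_rfl (Or.inl hA0)
  have h' := congrArg (Polynomial.map (evalRingHom s)) h
  simp only [Polynomial.map_add, Polynomial.map_mul, map_C, coe_evalRingHom] at h'
  refine hs.2 ⟨C (eval s (resultant A B))⁻¹ * p.map (evalRingHom s),
    C (eval s (resultant A B))⁻¹ * q.map (evalRingHom s), ?_⟩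
  calc _ = C (eval s (resultant A B))⁻¹ * (A.map (evalRingHom s) * p.map (evalRingHom s) +
        B.map (evalRingHom s) * q.map (evalRingHom s)) := by ring
    _ = 1 := by rw [h', ← C_mul, inv_mul_cancel₀ hne, C_1]

/-! ### Critical points for generic `s` -/

/-- The derivation `d/ds` of `F[s]` extends to formally étale algebras. -/
theorem exists_derivation {F L : Type*} [Field F] [Field L] [Algebra F L] [Algebra F[X] L]
    [IsScalarTower F F[X] L] [Algebra.FormallyEtale F[X] L] :
    ∃ δ : Derivation F L L, δ (algebraMap F[X] L X) = 1 := by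
  let d : Derivation F F[X] L := Polynomial.mkDerivation F (1 : L)
  let e := KaehlerDifferential.tensorKaehlerEquivOfFormallyEtale F F[X] L
  refine ⟨((d.liftKaehlerDifferential.liftBaseChange L) ∘ₗ e.symm.toLinearMap).compDer
    (KaehlerDifferential.D F L), ?_⟩
  have := KaehlerDifferential.tensorKaehlerEquivOfFormallyEtale_symm_D_algebraMap F F[X] L X
  change (d.liftKaehlerDifferential.liftBaseChange L) (e.symm _) = 1
  erw [this]
  simp [d]

/-- There is a separably closed field `L ⊇ F` with a derivation `δ` over `F` and an element `s`
transcendental over `F` such that `δ s = 1`: the separable closure of `F(s)`, to which `d/ds`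
extends because it is formally étale over `F[s]`. -/
theorem exists_differential_field (F : Type) [Field F] :
    ∃ (L : Type) (_ : Field L) (_ : Algebra F L) (s : L) (δ : Derivation F L L),
      IsSepClosed L ∧ Transcendental F s ∧ δ s = 1 := by
  have : Algebra.FormallyEtale F[X] (FractionRing F[X]) :=
    Algebra.FormallyEtale.of_isLocalization (nonZeroDivisors F[X])
  have : Algebra.FormallyEtale (FractionRing F[X]) (SeparableClosure (FractionRing F[X])) :=
    Algebra.FormallyEtale.of_isSeparable _ _
  have : Algebra.FormallyEtale F[X] (SeparableClosure (FractionRing F[X])) :=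
    Algebra.FormallyEtale.comp F[X] (FractionRing F[X]) _
  have hinj : Function.Injective (algebraMap F[X] (SeparableClosure (FractionRing F[X]))) := by
    rw [IsScalarTower.algebraMap_eq F[X] (FractionRing F[X]) (SeparableClosure (FractionRing F[X]))]
    exact (algebraMap (FractionRing F[X]) _).injective.comp (IsFractionRing.injective F[X] _)
  have : IsScalarTower F F[X] (SeparableClosure (FractionRing F[X])) :=
    .to₁₂₄ F F[X] (FractionRing F[X]) _
  obtain ⟨δ, hδ⟩ := exists_derivation (F := F) (L := SeparableClosure (FractionRing F[X]))
  exact ⟨_, inferInstance, inferInstance, _, δ, inferInstance,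
    (transcendental_algebraMap_iff hinj).2 (transcendental_X F), hδ⟩

section Generic

variable {F L : Type*} [Field F] [Field L] [Algebra F L] {s : L} {δ : Derivation F L L}

/-- A critical value `v` of `g + s x` at a critical point `ρ` satisfies `dv/ds = ρ`. Hence a
critical value of `g + s x` and one of `h + s x` are equal only if the critical points are. -/
theorem crit_eq_of_value_eq (hδ : δ s = 1) {g h : F[X]} {ρ σ : L}
    (hρ : aeval ρ (derivative g) + s = 0) (hσ : aeval σ (derivative h) + s = 0)
    (hv : aeval ρ g + s * ρ = aeval σ h + s * σ) : ρ = σ := by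
  have := congrArg δ hv
  simp only [map_add, Derivation.map_aeval, Derivation.leibniz, hδ, smul_eq_mul] at this
  linear_combination this - hρ * δ ρ + hσ * δ σ

/-- A critical point `ρ` of `g + s x` is transcendental, because `s = -g'(ρ)`. -/
theorem crit_transcendental (hs : Transcendental F s) {g : F[X]} {ρ : L}
    (hρ : aeval ρ (derivative g) + s = 0) : Transcendental F ρ := by
  have hs' : s = aeval ρ (-derivative g) := by
    rw [map_neg]
    exact eq_neg_of_add_eq_zero_right hρ
  exact (transcendental_aeval_iff.1 (hs' ▸ hs)).1

/-- The image of `g + s x` in `L[x]`. -/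
def genericPoly (g : F[X]) (s : L) : L[X] := g.map (algebraMap F L) + C s * X

theorem derivative_genericPoly (g : F[X]) (s : L) :
    derivative (genericPoly g s) = (derivative g).map (algebraMap F L) + C s := by
  simp [genericPoly, derivative_map]

theorem isRoot_derivative_genericPoly {g : F[X]} {s ρ : L} :
    (derivative (genericPoly g s)).IsRoot ρ ↔ aeval ρ (derivative g) + s = 0 := by
  simp [derivative_genericPoly, aeval_def, eval_map]

theorem eval_genericPoly (g : F[X]) (s ρ : L) :
    (genericPoly g s).eval ρ = aeval ρ g + s * ρ := by
  simp [genericPoly, aeval_def, eval_map]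

theorem genericPoly_monic {n : ℕ} (hn : 2 ≤ n) {g : F[X]} (hg : g.Monic) (hd : g.natDegree = n)
    (s : L) : (genericPoly g s).Monic ∧ (genericPoly g s).natDegree = n := by
  have h1 : (C s * X : L[X]).degree < (g.map (algebraMap F L)).degree := by
    rw [hg.degree_map, degree_eq_natDegree hg.ne_zero, hd]
    exact (degree_C_mul_X_le _).trans_lt (by exact_mod_cast hn)
  refine ⟨(hg.map _).add_of_left h1, ?_⟩
  rw [genericPoly, natDegree_add_eq_left_of_degree_lt h1, hg.natDegree_map, hd]

/-- A multiple critical point of `g + s x` would be a root of `g''`, hence algebraic over `F`. -/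
theorem derivative_genericPoly_separable (hs : Transcendental F s) {g : F[X]}
    (h2 : derivative (derivative g) ≠ 0) : (derivative (genericPoly g s)).Separable := by
  rw [Separable, isCoprime_iff_aeval_ne_zero_of_isAlgClosed L (AlgebraicClosure L)]
  intro ρ
  by_contra! hcon
  obtain ⟨h, hρ⟩ := hcon
  simp only [derivative_genericPoly, derivative_C, add_zero, map_add, aeval_C,
    derivative_map, aeval_map_algebraMap] at h hρ
  have hs' : Transcendental F (algebraMap L (AlgebraicClosure L) s) :=
    (transcendental_algebraMap_iff (algebraMap L _).injective).2 hs
  exact crit_transcendental hs' h ⟨_, h2, hρ⟩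

/-- The product formula for the discriminant of `g(x) + s x + t`; the critical points are
distinct. -/
theorem Dpoly_genericPoly_eq_prod [IsSepClosed L] (hs : Transcendental F s) {n : ℕ} (hn : 2 ≤ n)
    {g : F[X]} (hg : g.Monic) (hd : g.natDegree = n) (h2 : derivative (derivative g) ≠ 0) :
    ∃ c : L, c ≠ 0 ∧ Dpoly (genericPoly g s) =
      C c * ∏ ρ ∈ (derivative (genericPoly g s)).roots.toFinset,
        (X + C ((genericPoly g s).eval ρ)) := by
  have hsep := derivative_genericPoly_separable hs h2
  obtain ⟨hm, hnd⟩ := genericPoly_monic hn hg hd s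
  obtain ⟨c, hc, h⟩ := Dpoly_eq_prod (by omega) hm hnd hsep.ne_zero
    (IsSepClosed.splits_of_separable _ hsep)
  refine ⟨c, hc, ?_⟩
  rw [h, Finset.prod_multiset_map_count]
  congr 1
  refine Finset.prod_congr rfl fun ρ hρ => ?_
  rw [Multiset.count_eq_one_of_mem (nodup_roots hsep) (Multiset.mem_toFinset.1 hρ), pow_one]

theorem isCoprime_X_add_C {a b : L} (h : a ≠ b) : IsCoprime (X + C a) (X + C b) := by
  have := isCoprime_X_sub_C_of_isUnit_sub (R := L) (a := -a) (b := -b)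
    (by rw [neg_sub_neg]; exact (sub_ne_zero.2 h.symm).isUnit)
  simpa using this

theorem Dpoly_genericPoly_separable [IsSepClosed L] (hs : Transcendental F s) (hδ : δ s = 1)
    {n : ℕ} (hn : 2 ≤ n) {g : F[X]} (hg : g.Monic) (hd : g.natDegree = n)
    (h2 : derivative (derivative g) ≠ 0) : (Dpoly (genericPoly g s)).Separable := by
  obtain ⟨c, hc, h⟩ := Dpoly_genericPoly_eq_prod hs hn hg hd h2
  rw [h]
  refine Separable.unit_mul (isUnit_C.2 hc.isUnit)
    (separable_prod' (fun ρ hρ σ hσ hne => isCoprime_X_add_C fun hv => hne ?_)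
    fun ρ _ => separable_X_add_C _)
  rw [eval_genericPoly, eval_genericPoly] at hv
  exact crit_eq_of_value_eq hδ
    (isRoot_derivative_genericPoly.1 (isRoot_of_mem_roots (Multiset.mem_toFinset.1 hρ)))
    (isRoot_derivative_genericPoly.1 (isRoot_of_mem_roots (Multiset.mem_toFinset.1 hσ))) hv

/-- If `g + s x` and `h + s x` had equal critical values, they would be attained at a common
critical point `ρ`; then `g(ρ) = h(ρ)`, so `ρ` would be algebraic over `F`. -/
theorem Dpoly_genericPoly_isCoprime [IsSepClosed L] (hs : Transcendental F s) (hδ : δ s = 1)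
    {n : ℕ} (hn : 2 ≤ n) {g h : F[X]} (hg : g.Monic) (hgd : g.natDegree = n) (hh : h.Monic)
    (hhd : h.natDegree = n) (hg2 : derivative (derivative g) ≠ 0)
    (hh2 : derivative (derivative h) ≠ 0) (hne : g ≠ h) :
    IsCoprime (Dpoly (genericPoly g s)) (Dpoly (genericPoly h s)) := by
  obtain ⟨c, hc, hDg⟩ := Dpoly_genericPoly_eq_prod hs hn hg hgd hg2
  obtain ⟨c', hc', hDh⟩ := Dpoly_genericPoly_eq_prod hs hn hh hhd hh2
  rw [hDg, hDh, isCoprime_mul_unit_left_left (isUnit_C.2 hc.isUnit),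
    isCoprime_mul_unit_left_right (isUnit_C.2 hc'.isUnit)]
  refine IsCoprime.prod_left fun ρ hρ => IsCoprime.prod_right fun σ hσ =>
    isCoprime_X_add_C fun hv => ?_
  have hρ' := isRoot_derivative_genericPoly.1 (isRoot_of_mem_roots (Multiset.mem_toFinset.1 hρ))
  have hσ' := isRoot_derivative_genericPoly.1 (isRoot_of_mem_roots (Multiset.mem_toFinset.1 hσ))
  rw [eval_genericPoly, eval_genericPoly] at hv
  obtain rfl := crit_eq_of_value_eq hδ hρ' hσ' hv
  exact crit_transcendental hs hρ' ⟨g - h, sub_ne_zero.2 hne, by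
    rw [map_sub, sub_eq_zero]; exact add_right_cancel hv⟩

end Generic

/-- Both sides count the critical points of `g`, with multiplicity. -/
theorem natDegree_Dpoly {K : Type*} [Field K] {n : ℕ} (hn : 2 ≤ n) {g : K[X]} (hg : g.Monic)
    (hd : g.natDegree = n) (h0 : derivative g ≠ 0) :
    (Dpoly g).natDegree = (derivative g).natDegree := by
  set φ := algebraMap K (AlgebraicClosure K) with hφ
  have hs : (derivative (g.map φ)).Splits := IsAlgClosed.splits _
  have h0' : derivative (g.map φ) ≠ 0 := by
    rw [derivative_map]
    exact (Polynomial.map_ne_zero_iff φ.injective).2 h0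
  obtain ⟨c, hc, h⟩ := Dpoly_eq_prod (by omega) (hg.map φ) ((hg.natDegree_map φ).trans hd) h0' hs
  rw [Dpoly_map (by omega) hg hd] at h
  rw [← natDegree_map_eq_of_injective φ.injective, h, natDegree_C_mul hc,
    natDegree_multiset_prod_of_monic, Multiset.map_map,
    ← natDegree_map_eq_of_injective φ.injective (derivative g), ← derivative_map,
    hs.natDegree_eq_card_roots]
  · simp
  · simp only [Multiset.mem_map]
    rintro _ ⟨ρ, -, rfl⟩
    exact monic_X_add_C _

theorem natDegree_Dpoly_ne_zero {K : Type*} [Field K] {n : ℕ} (hn : 2 ≤ n) {g : K[X]}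
    (hg : g.Monic) (hd : g.natDegree = n) (h2 : derivative (derivative g) ≠ 0) :
    (Dpoly g).natDegree ≠ 0 := by
  rw [natDegree_Dpoly hn hg hd fun h => h2 (by rw [h, derivative_zero])]
  exact fun h => h2 (derivative_of_natDegree_zero h)

/-! ### Counting on one line -/

/-- On each line `s ↦ g_j + s x` with no `g_j''` identically zero, all but `2 r n (n - 1)` values
of `s` are good. -/
theorem card_bad_pencil_le {F : Type} [Field F] [Fintype F] {n r : ℕ} (hn : 2 ≤ n)
    {g : Fin r → F[X]} (hg : ∀ j, (g j).Monic) (hd : ∀ j, (g j).natDegree = n)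
    (hinj : Function.Injective g) (h2 : ∀ j, derivative (derivative (g j)) ≠ 0) (i : Fin r) :
    (Finset.univ.filter fun s : F => ¬ (0 < (Dpoly (g i + C s * X)).natDegree ∧
      Squarefree (Dpoly (g i + C s * X)) ∧
        ∀ j, j ≠ i → IsCoprime (Dpoly (g i + C s * X)) (Dpoly (g j + C s * X)))).card
      ≤ r * (2 * (n - 1) * n) := by
  obtain ⟨L, _, _, s₀, δ, _, hs₀, hδ⟩ := exists_differential_field F
  let φ : F[X] →+* L := (aeval s₀ : F[X] →ₐ[F] L)
  have hφ : Function.Injective φ := transcendental_iff_injective.1 hs₀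
  have hgen : ∀ j, (Dpoly (pencil (g j))).map φ = Dpoly (genericPoly (g j) s₀) := fun j => by
    obtain ⟨hm, hnd⟩ := pencil_monic hn (hg j) (hd j)
    rw [← Dpoly_map (by omega) hm hnd, pencil_map, genericPoly]
    congr 3
    · ext; simp [φ]
    · simp [φ]
  have hspec : ∀ (s : F) j,
      (Dpoly (pencil (g j))).map (evalRingHom s) = Dpoly (g j + C s * X) := fun s j => by
    obtain ⟨hm, hnd⟩ := pencil_monic hn (hg j) (hd j)
    rw [← Dpoly_map (by omega) hm hnd, pencil_map]
    have : (evalRingHom s).comp C = RingHom.id F := by ext; simp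
    rw [this, Polynomial.map_id, coe_evalRingHom, eval_X]
  have hgen2 : ∀ j, derivative (derivative (genericPoly (g j) s₀)) ≠ 0 := fun j => by
    simp only [derivative_genericPoly, derivative_add, derivative_C, add_zero, derivative_map]
    exact (Polynomial.map_ne_zero_iff (algebraMap F L).injective).2 (h2 j)
  have hle : ∀ j, (Dpoly (pencil (g j))).natDegree ≤ n - 1 := fun j => by
    obtain ⟨hm, hnd⟩ := genericPoly_monic hn (hg j) (hd j) s₀
    rw [← natDegree_map_eq_of_injective hφ, hgen,
      natDegree_Dpoly hn hm hnd fun h => hgen2 j (by rw [h, derivative_zero])]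
    exact (natDegree_derivative_le _).trans (by omega)
  have hpos : (Dpoly (pencil (g i))).natDegree ≠ 0 := by
    obtain ⟨hm, hnd⟩ := genericPoly_monic hn (hg i) (hd i) s₀
    rw [← natDegree_map_eq_of_injective hφ, hgen]
    exact natDegree_Dpoly_ne_zero hn hm hnd (hgen2 i)
  let A := Dpoly (pencil (g i))
  -- Squarefreeness is treated as coprimality with the derivative.
  let B : Fin r → F[X][X] := fun j => if j = i then derivative A else Dpoly (pencil (g j))
  have hA : CoeffDegLE n A := coeffDegLE_Dpoly hn (hg i) (hd i)
  have hT : ∀ j, (Finset.univ.filter fun s : F =>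
      ¬ IsCoprime (A.map (evalRingHom s)) ((B j).map (evalRingHom s))).card
        ≤ 2 * (n - 1) * n := fun j => by
    by_cases hj : j = i
    · have hB : B j = derivative A := if_pos hj
      rw [hB]
      refine card_not_isCoprime_le hA hA.derivative (hle i)
        ((natDegree_derivative_le _).trans ((Nat.sub_le _ _).trans (hle i))) hpos φ hφ ?_
      rw [← derivative_map, hgen]
      exact Dpoly_genericPoly_separable hs₀ hδ hn (hg i) (hd i) (h2 i)
    · have hB : B j = Dpoly (pencil (g j)) := if_neg hj
      rw [hB]
      refine card_not_isCoprime_le hA (coeffDegLE_Dpoly hn (hg j) (hd j)) (hle i) (hle j) hpos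
        φ hφ ?_
      rw [hgen, hgen]
      exact Dpoly_genericPoly_isCoprime hs₀ hδ hn (hg i) (hd i) (hg j) (hd j) (h2 i) (h2 j)
        fun h => hj (hinj h.symm)
  have hsub : (Finset.univ.filter fun s : F => ¬ (0 < (Dpoly (g i + C s * X)).natDegree ∧
      Squarefree (Dpoly (g i + C s * X)) ∧
        ∀ j, j ≠ i → IsCoprime (Dpoly (g i + C s * X)) (Dpoly (g j + C s * X)))) ⊆
      Finset.univ.biUnion fun j => Finset.univ.filter fun s : F =>
        ¬ IsCoprime (A.map (evalRingHom s)) ((B j).map (evalRingHom s)) := by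
    intro s hs
    by_contra hcon
    simp only [Finset.mem_biUnion, Finset.mem_filter, Finset.mem_univ, true_and, not_exists,
      not_not] at hcon
    rw [Finset.mem_filter] at hs
    refine hs.2 ⟨Nat.pos_of_ne_zero ?_, ?_, fun j hj => ?_⟩
    · have h := genericPoly_monic hn (hg i) (hd i) s
      simp only [genericPoly, Algebra.algebraMap_self, Polynomial.map_id] at h
      refine natDegree_Dpoly_ne_zero hn h.1 h.2 ?_
      simpa using h2 i
    · have h := hcon i
      rw [show B i = derivative A from if_pos rfl, ← derivative_map, hspec] at h
      exact Separable.squarefree h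
    · have h := hcon j
      rwa [show B j = _ from if_neg hj, hspec, hspec] at h
  refine (Finset.card_le_card hsub).trans ?_
  refine (Finset.card_biUnion_le_card_mul _ _ _ fun j _ => hT j).trans ?_
  simp

/-! ### Counting over all lines -/

theorem fPoly_cons {F : Type*} [Field F] (m : ℕ) (s : F) (b : Fin m → F) :
    fPoly (m + 2) (Fin.cons s b : Fin (m + 1) → F) =
      fPoly (m + 2) (Fin.cons 0 b : Fin (m + 1) → F) + C s * X := by
  simp only [fPoly]
  erw [Fin.sum_univ_succ, Fin.sum_univ_succ]
  simp
  ring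

theorem fPoly_add_monic {F : Type*} [Field F] {n : ℕ} (hn : 1 ≤ n) (a : Fin (n - 1) → F) {α : F[X]}
    (hα : α.degree < n) : (fPoly n a + α).Monic ∧ (fPoly n a + α).natDegree = n := by
  have h : (∑ i : Fin (n - 1), C (a i) * X ^ ((i : ℕ) + 1) + α).degree < n := by
    refine (degree_add_le _ _).trans_lt (max_lt ((degree_sum_le _ _).trans_lt ?_) hα)
    refine (Finset.sup_lt_iff (WithBot.bot_lt_coe n)).2 fun i _ => ?_
    refine (degree_C_mul_X_pow_le _ _).trans_lt ?_
    have := i.2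
    exact Nat.cast_lt.2 (by omega : (i : ℕ) + 1 < n)
  rw [fPoly, add_assoc]
  exact ⟨monic_X_pow_add h, by rw [natDegree_add_eq_left_of_degree_lt (by simpa using h),
    natDegree_X_pow]⟩

theorem derivative_derivative_ne_zero {F : Type*} [Field F] (h2 : (2 : F) ≠ 0) {g : F[X]}
    (hg : g.coeff 2 ≠ 0) : derivative (derivative g) ≠ 0 := by
  intro h
  have := congrArg (fun p => coeff p 0) h
  simp [coeff_derivative, one_add_one_eq_two, hg, h2] at this

/-- Few choices of `a_2, …, a_{n-1}` make some `(f_a + α_j)''` vanish: none when `n = 2`, and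
otherwise `a_2` must be one of at most `r` values. -/
theorem card_exceptional_le {F : Type*} [Field F] [Fintype F] (h2 : (2 : F) ≠ 0) (m r : ℕ)
    (α : Fin r → F[X]) (hdeg : ∀ j, (α j).degree < (m + 2 : ℕ)) :
    (Finset.univ.filter fun b : Fin m → F => ∃ j, derivative (derivative
      (fPoly (m + 2) (Fin.cons 0 b : Fin (m + 1) → F) + α j)) = 0).card * Fintype.card F ≤
      r * Fintype.card F ^ m := by
  cases m with
  | zero =>
    rw [Finset.filter_eq_empty_iff.2, Finset.card_empty, zero_mul]
    · exact Nat.zero_le _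
    · rintro b - ⟨j, hj⟩
      refine derivative_derivative_ne_zero h2 ?_ hj
      obtain ⟨hm, hd⟩ := fPoly_add_monic (n := 2) (by norm_num)
        (Fin.cons 0 b : Fin 1 → F) (hdeg j)
      have := hm.coeff_natDegree
      rw [hd] at this
      exact this ▸ one_ne_zero
  | succ k =>
    have hsub : (Finset.univ.filter fun b : Fin (k + 1) → F => ∃ j, derivative (derivative
        (fPoly (k + 1 + 2) (Fin.cons 0 b : Fin (k + 2) → F) + α j)) = 0) ⊆
        Finset.univ.biUnion fun j => Finset.univ.image fun c : Fin k → F =>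
          (Fin.cons (-(α j).coeff 2) c : Fin (k + 1) → F) := by
      intro b hb
      rw [Finset.mem_filter] at hb
      obtain ⟨-, j, hj⟩ := hb
      have h0 : b 0 + (α j).coeff 2 = 0 := by
        by_contra hne
        refine derivative_derivative_ne_zero h2 ?_ hj
        have : (fPoly (k + 1 + 2) (Fin.cons 0 b : Fin (k + 2) → F)).coeff 2 = b 0 := by
          simp only [fPoly]
          erw [Fin.sum_univ_succ, Fin.sum_univ_succ]
          simp [coeff_X_pow]
        rwa [coeff_add, this]
      rw [Finset.mem_biUnion]
      refine ⟨j, Finset.mem_univ _, Finset.mem_image.2 ⟨Fin.tail b, Finset.mem_univ _, ?_⟩⟩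
      rw [← eq_neg_of_add_eq_zero_left h0, Fin.cons_self_tail]
    have h1 := (Finset.card_le_card hsub).trans
      (Finset.card_biUnion_le_card_mul _ _ (Fintype.card F ^ k) fun j _ =>
        Finset.card_image_le.trans (by simp))
    rw [Finset.card_univ, Fintype.card_fin] at h1
    calc _ ≤ r * Fintype.card F ^ k * Fintype.card F := Nat.mul_le_mul_right _ h1
      _ = _ := by ring

/-- **Proposition 2.1**: the complement of the good set is small: `#G_n^c ≤ 3 r n² q^{n-2}`. -/
theorem card_bad_le (q n r : ℕ) (hq : Odd q) (hn : 1 < n) (hr : 1 < r)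
    (F : Type) [Field F] [Fintype F] (hF : Fintype.card F = q)
    (α : Fin r → Polynomial F) (hα : Function.Injective α)
    (hdeg : ∀ j, (α j).degree < n) (i : Fin r) :
    (Finset.univ \ goodSet F n r α i).card ≤ 3 * r * n ^ 2 * q ^ (n - 2) := by
  subst hF
  obtain ⟨m, rfl⟩ : ∃ m, n = m + 2 := ⟨n - 2, by omega⟩
  have h2 : (2 : F) ≠ 0 := Ring.two_ne_zero fun h => by
    have := FiniteField.even_card_iff_char_two.1 h
    rw [Nat.odd_iff] at hq
    omega
  set q := Fintype.card F
  let bad : Finset (Fin (m + 1) → F) := Finset.univ \ goodSet F (m + 2) r α i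
  let E : Finset (Fin m → F) := Finset.univ.filter fun b => ∃ j, derivative (derivative
    (fPoly (m + 2) (Fin.cons 0 b : Fin (m + 1) → F) + α j)) = 0
  let N := r * (2 * (m + 1) * (m + 2))
  -- The fibre of `bad` over `(a_2, …, a_{n-1}) = b` is contained in a line with parameter `a_1`.
  have hfib : ∀ b : Fin m → F, (bad.filter fun a => Fin.tail a = b).card ≤
      (Finset.univ.filter fun s : F => (Fin.cons s b : Fin (m + 1) → F) ∈ bad).card := fun b => by
    refine Finset.card_le_card_of_injOn (fun a => a 0) (fun a ha => ?_) fun a ha a' ha' h => ?_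
    · simp only [Finset.coe_filter, Set.mem_ofPred_eq] at ha
      obtain ⟨ha, rfl⟩ := ha
      simpa using ha
    · simp only [Finset.coe_filter, Set.mem_ofPred_eq] at ha ha'
      rw [← Fin.cons_self_tail a, ← Fin.cons_self_tail a', ha.2, ha'.2]
      exact congrArg (fun s : F => (Fin.cons s b : Fin (m + 1) → F)) h
  have hbound : ∀ b : Fin m → F, (bad.filter fun a => Fin.tail a = b).card ≤
      N + if b ∈ E then q else 0 := fun b => by
    refine (hfib b).trans ?_
    by_cases hb : b ∈ E
    · rw [if_pos hb]
      exact (Finset.card_le_univ _).trans (Nat.le_add_left _ _)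
    · rw [if_neg hb, add_zero]
      have hb' : ∀ j, derivative (derivative
          (fPoly (m + 2) (Fin.cons 0 b : Fin (m + 1) → F) + α j)) ≠ 0 := fun j hj =>
        hb (Finset.mem_filter.2 ⟨Finset.mem_univ _, j, hj⟩)
      have hmon := fun j => fPoly_add_monic (n := m + 2) (by omega)
        (Fin.cons 0 b : Fin (m + 1) → F) (hdeg j)
      refine (Finset.card_le_card fun s hs => ?_).trans (card_bad_pencil_le (n := m + 2) (by omega)
        (fun j => (hmon j).1) (fun j => (hmon j).2) (fun j k h => hα (add_left_cancel h)) hb' i)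
      have hline : ∀ j, fPoly (m + 2) (Fin.cons s b : Fin (m + 1) → F) + α j =
          fPoly (m + 2) (Fin.cons 0 b : Fin (m + 1) → F) + α j + C s * X := fun j => by
        rw [fPoly_cons]
        ring
      simp only [bad, Finset.mem_filter, Finset.mem_univ, true_and, Finset.mem_sdiff, goodSet,
        hline] at hs ⊢
      exact hs
  have hE : E.card * q ≤ r * q ^ m := card_exceptional_le h2 m r α hdeg
  change bad.card ≤ 3 * r * (m + 2) ^ 2 * q ^ m
  calc bad.card = ∑ b : Fin m → F, (bad.filter fun a => Fin.tail a = b).card :=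
        Finset.card_eq_sum_card_fiberwise fun _ _ => Finset.mem_univ _
    _ ≤ ∑ b : Fin m → F, (N + if b ∈ E then q else 0) := Finset.sum_le_sum fun b _ => hbound b
    _ = q ^ m * N + E.card * q := by
      rw [Finset.sum_add_distrib, Finset.sum_ite_mem, Finset.univ_inter]
      simp [q]
    _ ≤ q ^ m * N + r * q ^ m := Nat.add_le_add_left hE _
    _ = q ^ m * r * (2 * (m + 1) * (m + 2) + 1) := by ring
    _ ≤ q ^ m * r * (3 * (m + 2) ^ 2) := Nat.mul_le_mul_left _ (by nlinarith)
    _ = 3 * r * (m + 2) ^ 2 * q ^ m := by ring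
end
end

section
/- Let q be an odd prime power, n > 1, and let α ∈ F_q[x] with deg α < n. Let A = {a ∈ F_q^{n−1} : D_{f_a+α}(t) is a constant polynomial, or D_{f_a+α}(t) is not squarefree}. Then #A ≤ 3n²·q^{n−2}. -/
/-!
Write `g = f_a + α`, a monic polynomial of degree `n`. Since `D_g(t)` is up to sign the resultant of
`g + t` and `g'`, over an algebraic closure it is a constant times `∏ (t + g(ρ))`, the product being
over the roots `ρ` of `g'` with multiplicity (`Dpoly_map_eq`). So, as long as `g'` is nonconstant,
`a` lies in the bad set only if there are `ρ, σ` with `(x - ρ)(x - σ) ∣ g'` and `g(ρ) = g(σ)`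
(`exists_critical_pair`). For `n = 2` this is impossible by degree.

For `n ≥ 3` fix everything but the two lowest free coefficients: `g = h + b₁ x + b₂ x²`. The
relations `g'(ρ) = g'(σ) = 0` and `g(ρ) = g(σ)` then give

* `A(ρ, σ) + 2 b₂ = 0`, where `A(y, x) = (h'(x) - h'(y)) / (x - y)`;
* `E(ρ, σ) = 0`, where `E(y, x) = (x - y)(h'(x) + h'(y)) - 2 (h(x) - h(y))`, in which `b₁` and `b₂`
  have cancelled;
* `b₁ = -(h'(ρ) + 2 b₂ ρ)`.

Here `E ≠ 0` because the characteristic is odd and `n ≥ 3` (`critE_ne_zero`). Eliminate `x`: let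
`R(y)` be the resultant in `x` of `A + 2 b₂` and `E`. If `R = 0`, then `-2 b₂` is the value of `A` at
a root `x` of `E` in an algebraic closure of `F_q(y)`, which allows at most `n` values of `b₂`
(`card_resultant_eq_zero_le`). Otherwise `ρ` is a root of `R`, a polynomial of degree at most
`2 n (n - 2)`, and `ρ` determines `b₁`. One more value of `b₂` is set aside to keep `g'` nonconstant,
so at most `(2 n (n - 2) + n + 1) q ≤ 3 n² q` pairs `(b₁, b₂)` are bad (`card_bad_pairs_le`), and
there are `q ^ (n - 3)` choices for the remaining coefficients.
-/

open Polynomial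

noncomputable section
open scoped Classical

/-! ### Factorization of `D_g(t)` over an algebraic closure -/

/-- The two Sylvester matrices agree after transposing and reversing rows and columns. -/
lemma presultant_eq_resultant {R : Type*} [CommRing R] (m n : ℕ) (P Q : R[X]) :
    presultant m n P Q = resultant P Q m n := by
  let e : Fin (m + n) ≃ Fin (n + m) := (finCongr (add_comm m n)).trans Fin.revPerm
  rw [presultant, resultant, ← Matrix.det_transpose (sylvester P Q m n),
    ← Matrix.det_submatrix_equiv_self e]
  congr 1
  ext i j
  induction i using Fin.addCases with
  | left i =>
    have h1 : ¬ ((e (Fin.castAdd n i) : Fin (n + m)) : ℕ) < n := by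
      simp [e, Fin.val_rev]; omega
    simp only [Matrix.submatrix_apply, sylvesterMatrix, Matrix.of_apply, h1, if_false,
      Matrix.transpose_apply, sylvester, Fin.addCases_left, Set.mem_Icc]
    have hi := i.2
    have hj := j.2
    simp only [e, Equiv.trans_apply, finCongr_apply, Fin.revPerm_apply, Fin.val_rev, Fin.val_cast,
      Fin.val_castAdd]
    split_ifs <;> first | rfl | (congr 1; omega)
  | right i =>
    have h1 : ((e (Fin.natAdd m i) : Fin (n + m)) : ℕ) < n := by
      simp [e, Fin.val_rev]; omega
    simp only [Matrix.submatrix_apply, sylvesterMatrix, Matrix.of_apply, h1, if_true,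
      Matrix.transpose_apply, sylvester, Fin.addCases_right, Set.mem_Icc]
    have hi := i.2
    have hj := j.2
    simp only [e, Equiv.trans_apply, finCongr_apply, Fin.revPerm_apply, Fin.val_rev, Fin.val_cast,
      Fin.val_natAdd]
    split_ifs <;> first | rfl | (congr 1; omega)

/-- `D_g(t)` is a nonzero constant times `∏ (t + g(ρ))` over the critical points `ρ` of `g`. The
derivative of `g` may have degree less than `deg g - 1`; as `g` is monic this only affects the sign
of the resultant. -/
lemma Dpoly_map_eq {F L : Type*} [Field F] [Field L] [IsAlgClosed L] (ι : F →+* L) {g : F[X]}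
    (hg : g.Monic) (hd : 0 < g.natDegree) (hg' : derivative g ≠ 0) :
    ∃ c : L, c ≠ 0 ∧ (Dpoly g).map ι = C c *
      ((derivative (g.map ι)).roots.map fun ρ => X + C (eval ρ (g.map ι))).prod := by
  set G : F[X][X] := g.map C + C X with hG
  have hGdeg : G.natDegree = g.natDegree := by
    rw [hG, natDegree_add_C, natDegree_map_eq_of_injective C_injective]
  have hG' : derivative G = (derivative g).map C := by simp [hG, derivative_map]
  set n := g.natDegree with hn
  set f : L[X] := derivative (g.map ι) with hf
  have hf0 : f ≠ 0 := by
    rw [hf, derivative_map]; exact (Polynomial.map_ne_zero_iff ι.injective).2 hg'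
  have hfdeg : f.natDegree ≤ n - 1 := by
    refine (natDegree_derivative_le _).trans ?_
    rw [natDegree_map]
  obtain ⟨k, hk⟩ := Nat.exists_eq_add_of_le hfdeg
  have hP : G.map (mapRingHom ι) = (g.map ι).map C + C X := by
    rw [hG]
    simp only [Polynomial.map_add, map_C, coe_mapRingHom, map_X, Polynomial.map_map]
    congr 2
    ext x; simp
  have hQ : (derivative G).map (mapRingHom ι) = f.map C := by
    rw [hG', hf, derivative_map, Polynomial.map_map, Polynomial.map_map]
    congr 1
    ext x; simp
  set P : L[X][X] := (g.map ι).map C + C X with hPdef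
  have hPn : P.coeff n = 1 := by
    have : g.natDegree ≠ 0 := hd.ne'
    simp [hPdef, coeff_C, this, hn, hg.coeff_natDegree]
  have hPdeg : P.natDegree ≤ n := by
    rw [hPdef, natDegree_add_C, natDegree_map_eq_of_injective C_injective, natDegree_map]
  have hQdeg : (f.map (C : L →+* L[X])).natDegree = f.natDegree :=
    natDegree_map_eq_of_injective C_injective _
  have hsplit : (f.map (C : L →+* L[X])).Splits := (IsAlgClosed.splits f).map _
  have key : resultant (f.map C) P (n - 1) n = (-1) ^ (n * k) * (C f.leadingCoeff ^ n *
      (f.roots.map fun ρ => X + C (eval ρ (g.map ι))).prod) := by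
    rw [hk, ← hQdeg, resultant_add_left_deg _ _ _ _ _ le_rfl, hPn, one_pow, mul_one,
      resultant_eq_prod_eval _ _ _ hPdeg hsplit, leadingCoeff_map_of_injective C_injective,
      (IsAlgClosed.splits f).roots_map_of_injective C_injective, Multiset.map_map]
    congr 3
    refine Multiset.map_congr rfl fun ρ _ => ?_
    simp [hPdef, eval_map, add_comm, eval₂_at_apply]
  refine ⟨(-1) ^ (n * (n - 1) / 2) * (-1) ^ (n * (n - 1)) * (-1) ^ (n * k) * f.leadingCoeff ^ n,
    by simp [hf0], ?_⟩
  have h1 : (Dpoly g).map ι = (-1) ^ (n * (n - 1) / 2) *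
      ((-1) ^ (n * (n - 1)) * resultant (f.map C) P (n - 1) n) := by
    rw [← resultant_comm, ← hP, ← hQ, resultant_map_map, Dpoly, pdisc, hGdeg,
      presultant_eq_resultant]
    rw [hG]
    simp
  rw [h1, key]
  simp only [map_mul, map_pow, map_neg, map_one]
  ring

/-- A bad `g` with nonconstant derivative has a double critical point (`ρ = σ`) or two distinct
critical points with the same critical value. -/
lemma exists_critical_pair {F L : Type*} [Field F] [Field L] [IsAlgClosed L] (ι : F →+* L)
    {g : F[X]} (hg : g.Monic) (hg' : 0 < (derivative g).natDegree)
    (hbad : (Dpoly g).natDegree = 0 ∨ ¬ Squarefree (Dpoly g)) :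
    ∃ ρ σ : L, (X - C ρ) * (X - C σ) ∣ derivative (g.map ι) ∧
      eval ρ (g.map ι) = eval σ (g.map ι) := by
  have hd : 0 < g.natDegree := by
    rcases Nat.eq_zero_or_pos g.natDegree with h | h
    · rw [derivative_of_natDegree_zero h] at hg'; simp at hg'
    · exact h
  obtain ⟨c, hc, hD⟩ := Dpoly_map_eq ι hg hd (by rintro h; simp [h] at hg')
  set f := derivative (g.map ι) with hf
  have hf0 : f ≠ 0 := by
    rintro h
    rw [hf, derivative_map, Polynomial.map_eq_zero] at h
    simp [h] at hg'
  have hprod : (f.roots.map fun ρ => X + C (eval ρ (g.map ι))).prod =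
      ((f.roots.map fun ρ => -eval ρ (g.map ι)).map fun v => X - C v).prod := by
    rw [Multiset.map_map]; simp
  by_contra! hcon
  have hnodup : (f.roots.map fun ρ => -eval ρ (g.map ι)).Nodup := by
    have hdvd : ∀ ρ σ : L, ({ρ, σ} : Multiset L) ≤ f.roots → (X - C ρ) * (X - C σ) ∣ f := by
      intro ρ σ h
      simpa using (Multiset.prod_X_sub_C_dvd_iff_le_roots hf0 {ρ, σ}).2 h
    have hroots : f.roots.Nodup := by
      refine Multiset.nodup_iff_le.2 fun ρ h => hcon ρ ρ (hdvd ρ ρ h) rfl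
    refine hroots.map_on fun ρ hρ σ hσ h => ?_
    by_contra hne
    refine hcon ρ σ (hdvd ρ σ ?_) (neg_injective h)
    refine (Multiset.le_iff_subset (by simpa using hne)).2 fun x hx => ?_
    simp only [Multiset.insert_eq_cons, Multiset.mem_cons, Multiset.mem_singleton] at hx
    rcases hx with rfl | rfl <;> assumption
  have hcu : IsUnit (C c : L[X]) := isUnit_C.2 (isUnit_iff_ne_zero.2 hc)
  rcases hbad with h | h
  · have h1 : ((Dpoly g).map ι).natDegree = 0 := by rw [natDegree_map, h]
    rw [hD, hprod, natDegree_C_mul hc, natDegree_multiset_prod_X_sub_C_eq_card,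
      Multiset.card_map, ← (IsAlgClosed.splits f).natDegree_eq_card_roots, hf, derivative_map,
      natDegree_map] at h1
    omega
  · apply h
    have hsq : Squarefree ((Dpoly g).map ι) := by
      rw [hD, hprod]
      refine Separable.squarefree ?_
      refine Separable.unit_mul hcu ?_
      refine (nodup_roots_iff_of_splits ?_ ?_).1 ?_
      · exact (monic_multiset_prod_of_monic _ _ fun v _ => monic_X_sub_C v).ne_zero
      · exact IsAlgClosed.splits _
      · rwa [roots_multiset_prod_X_sub_C]
    intro x hx
    have := hsq (x.map ι) (by rw [← Polynomial.map_mul]; exact Polynomial.map_dvd ι hx)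
    exact (Polynomial.isUnit_map ι).1 this

/-! ### Elimination of a variable by resultants -/

/-- The degree in the inner variable is bounded by the outer degree after exchanging variables. -/
lemma natDegree_coeff_le_swap {K : Type*} [CommRing K] (P : K[X][X]) (k : ℕ) :
    (P.coeff k).natDegree ≤ (Bivariate.swap P).natDegree := by
  have hcc : ∀ i j, ((Bivariate.swap P).coeff i).coeff j = (P.coeff j).coeff i := by
    intro i j
    induction P using Polynomial.induction_on' with
    | add p q hp hq => simp [hp, hq]
    | monomial n f =>
      induction f using Polynomial.induction_on' with
      | add p q hp hq => simp only [map_add, coeff_add, hp, hq]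
      | monomial m r =>
        rw [Bivariate.swap_monomial_monomial]
        simp only [coeff_monomial]
        split_ifs <;> simp_all [coeff_monomial]
  rw [natDegree_le_iff_coeff_eq_zero]
  intro N hN
  rw [← hcc, coeff_eq_zero_of_natDegree_lt hN, coeff_zero]

lemma natDegree_det_le_sum {K : Type*} [CommRing K] {ι : Type*} [Fintype ι] [DecidableEq ι]
    (M : Matrix ι ι K[X]) (c : ι → ℕ) (h : ∀ i j, (M i j).natDegree ≤ c j) :
    M.det.natDegree ≤ ∑ j, c j := by
  rw [Matrix.det_apply]
  refine natDegree_sum_le_of_forall_le _ _ fun τ _ => (natDegree_smul_le _ _).trans ?_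
  exact (natDegree_prod_le _ _).trans (Finset.sum_le_sum fun j _ => h _ _)

lemma natDegree_resultant_le {K : Type*} [CommRing K] (A E : K[X][X]) {a e : ℕ}
    (hA : ∀ k, (A.coeff k).natDegree ≤ a) (hE : ∀ k, (E.coeff k).natDegree ≤ e) (m n : ℕ) :
    (resultant A E m n).natDegree ≤ m * e + n * a := by
  rw [resultant]
  refine (natDegree_det_le_sum _ (Fin.addCases (fun _ => e) (fun _ => a)) ?_).trans ?_
  · intro i j
    induction j using Fin.addCases <;>
      simp only [sylvester, Matrix.of_apply, Fin.addCases_left, Fin.addCases_right] <;>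
      split_ifs <;> simp [hA, hE]
  · simp [Fin.sum_univ_add]

/-- If the resultant of `A + c b` and `E` vanishes, then `-c b` is the value of `A` at a root of `E` in
an algebraic closure of `F(y)`, and `E` has at most `deg E` roots there. -/
lemma card_resultant_eq_zero_le {F : Type*} [Field F] [Fintype F] (A E : F[X][X]) (hE : E ≠ 0)
    {c : F} (hc : c ≠ 0) :
    (Finset.univ.filter fun b : F => resultant (A + C (C (c * b))) E = 0).card ≤ E.natDegree := by
  let L := AlgebraicClosure (FractionRing F[X])
  let φ : F[X] →+* L := algebraMap F[X] L
  have hφ : Function.Injective φ := by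
    exact (FaithfulSMul.algebraMap_injective (FractionRing F[X]) L).comp
      (IsFractionRing.injective F[X] (FractionRing F[X]))
  have hinj : Function.Injective fun b : F => φ (C (c * b)) :=
    hφ.comp (C_injective.comp (mul_right_injective₀ hc))
  rw [← Finset.card_image_of_injective _ hinj]
  have hE0 : E.map φ ≠ 0 := (Polynomial.map_ne_zero_iff hφ).2 hE
  calc _ ≤ ((E.map φ).roots.toFinset.image fun σ => -eval σ (A.map φ)).card := by
        refine Finset.card_le_card fun v hv => ?_
        simp only [Finset.mem_image, Finset.mem_filter, Finset.mem_univ, true_and] at hv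
        obtain ⟨b, hb, rfl⟩ := hv
        have h0 := congrArg φ hb
        rw [← resultant_map_map, ← natDegree_map_eq_of_injective hφ,
          ← natDegree_map_eq_of_injective hφ E, map_zero, resultant_eq_zero_iff,
          isCoprime_iff_aeval_ne_zero_of_isAlgClosed L L] at h0
        have h1 := h0.2
        push Not at h1
        obtain ⟨σ, hσA, hσE⟩ := h1
        simp only [Finset.mem_image, Multiset.mem_toFinset, mem_roots hE0, IsRoot.def]
        refine ⟨σ, by simpa using hσE, ?_⟩
        simp only [Polynomial.map_add, map_C, coe_aeval_eq_eval, eval_add, eval_C] at hσA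
        linear_combination -hσA
    _ ≤ (E.map φ).roots.toFinset.card := Finset.card_image_le
    _ ≤ (E.map φ).roots.card := Multiset.toFinset_card_le _
    _ ≤ _ := (card_roots' _).trans_eq (natDegree_map_eq_of_injective hφ E)

/-- A common zero of `A` and `E` at `y = ρ`, `x = σ` makes their resultant in `x` vanish at `ρ`: the
resultant is a combination of `A` and `E`. -/
lemma eval_resultant_eq_zero {F L : Type*} [Field F] [Field L] (ι : F →+* L) (A E : F[X][X])
    (hE : E.natDegree ≠ 0) {ρ σ : L} (h1 : eval σ (A.map (eval₂RingHom ι ρ)) = 0)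
    (h2 : eval σ (E.map (eval₂RingHom ι ρ)) = 0) :
    eval ρ ((resultant A E).map ι) = 0 := by
  obtain ⟨p, q, -, -, h⟩ := exists_mul_add_mul_eq_C_resultant A E le_rfl le_rfl (Or.inr hE)
  have h3 := congrArg (fun P => eval σ (P.map (eval₂RingHom ι ρ))) h
  simp only [Polynomial.map_add, Polynomial.map_mul, eval_add, eval_mul, h1, h2, zero_mul,
    add_zero, map_C, eval_C, coe_eval₂RingHom] at h3
  rw [eval_map, ← h3]

/-! ### The two equations of a critical pair -/

/-- `E(y, x) = (x - y)(h'(x) + h'(y)) - 2 (h(x) - h(y))`, with `y` the inner and `x` the outer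
variable. It is linear in `h` and vanishes when `deg h ≤ 2`. -/
def critE {F : Type*} [CommRing F] (h : F[X]) : F[X][X] :=
  (X - C X) * ((derivative h).map C + C (derivative h)) - 2 * (h.map C - C h)

lemma critE_ne_zero {F : Type*} [Field F] (h2 : (2 : F) ≠ 0) {h : F[X]} (hm : h.Monic)
    (hn : 3 ≤ h.natDegree) : critE h ≠ 0 := by
  intro h0
  obtain ⟨n, hn'⟩ : ∃ n, h.natDegree = n + 3 := ⟨h.natDegree - 3, by omega⟩
  have hc : h.coeff (n + 3) = 1 := by rw [← hn']; exact hm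
  have hc4 : h.coeff (n + 4) = 0 := coeff_eq_zero_of_natDegree_lt (by omega)
  have e : critE h = X * (derivative h).map C + X * C (derivative h) -
      C X * (derivative h).map C - C X * C (derivative h) - C (C 2) * (h.map C) + 2 * C h := by
    rw [critE]; simp only [map_ofNat]; ring
  -- With `N = deg h`, the coefficients of `x ^ N` and `x ^ (N - 1) * y` are `N - 2` and `-N`, which
  -- cannot both vanish in odd characteristic.
  have c1 := congrArg (fun P => (P.coeff (n + 3)).coeff 0) h0
  have c2 := congrArg (fun P => (P.coeff (n + 2)).coeff 1) h0
  simp only [e, ← C_mul, ← C_ofNat] at c1 c2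
  simp [coeff_derivative, coeff_C, coeff_X_mul, hc, hc4, coeff_one] at c1 c2
  exact h2 (by linear_combination -c1 - c2)

lemma swap_critE {F : Type*} [CommRing F] (h : F[X]) : Bivariate.swap (critE h) = -critE h := by
  simp only [critE, map_sub, map_mul, map_add, Bivariate.swap_Y,
    Bivariate.swap_C, Bivariate.swap_map_C, map_ofNat, Polynomial.map_X]
  ring

lemma natDegree_critE_le {F : Type*} [Field F] {h : F[X]} (hn : 0 < h.natDegree) :
    (critE h).natDegree ≤ h.natDegree := by
  have hd := natDegree_derivative_le h
  have hmap : ∀ p : F[X], (p.map (C : F →+* F[X])).natDegree = p.natDegree := fun p =>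
    natDegree_map_eq_of_injective C_injective p
  refine (natDegree_sub_le _ _).trans (max_le ?_ ?_)
  · refine natDegree_mul_le.trans ?_
    rw [natDegree_X_sub_C, natDegree_add_C, hmap]
    omega
  · refine natDegree_mul_le.trans ?_
    rw [natDegree_sub_C, hmap]
    simp

/-- The divided difference `A(y, x) = (h'(x) - h'(y)) / (x - y)`, which is symmetric. -/
lemma exists_critA {F : Type*} [Field F] (h : F[X]) : ∃ A : F[X][X],
    (X - C X) * A = (derivative h).map C - C (derivative h) ∧
    A.natDegree ≤ h.natDegree - 2 ∧ Bivariate.swap A = A := by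
  have hX : (X - C X : F[X][X]) ≠ 0 := X_sub_C_ne_zero _
  obtain ⟨A, hA⟩ : (X - C X : F[X][X]) ∣ (derivative h).map C - C (derivative h) := by
    rw [dvd_iff_isRoot]
    simp [eval_map]
  refine ⟨A, hA.symm, ?_, ?_⟩
  · by_cases h0 : A = 0
    · simp [h0]
    have hd := natDegree_derivative_le h
    have h1 := congrArg natDegree hA
    rw [natDegree_sub_C, natDegree_map_eq_of_injective C_injective, natDegree_mul hX h0,
      natDegree_X_sub_C] at h1
    omega
  · have h1 := congrArg Bivariate.swap hA
    simp only [map_sub, map_mul, Bivariate.swap_Y, Bivariate.swap_C,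
      Bivariate.swap_map_C, Polynomial.map_X] at h1
    refine mul_left_cancel₀ hX ?_
    rw [← hA]
    linear_combination h1

/-- The equations satisfied by a critical pair `ρ, σ` of `g = h + b₁ x + b₂ x²`: the first is
`(g'(σ) - g'(ρ)) / (σ - ρ) = 0`, extended to `ρ = σ` by the divisibility hypothesis. -/
lemma critical_pair_spec {F L : Type*} [Field F] [Field L] (ι : F →+* L) {h : F[X]}
    {A : F[X][X]} (hA : (X - C X) * A = (derivative h).map C - C (derivative h)) {b₁ b₂ : F}
    {ρ σ : L}
    (hdvd : (X - C ρ) * (X - C σ) ∣ derivative ((h + C b₁ * X + C b₂ * X ^ 2).map ι))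
    (heq : eval ρ ((h + C b₁ * X + C b₂ * X ^ 2).map ι) =
      eval σ ((h + C b₁ * X + C b₂ * X ^ 2).map ι)) :
    eval σ ((A + C (C (2 * b₂))).map (eval₂RingHom ι ρ)) = 0 ∧
      eval σ ((critE h).map (eval₂RingHom ι ρ)) = 0 ∧
      ι b₁ = -(eval ρ ((derivative h).map ι) + 2 * ι b₂ * ρ) := by
  have hcomp : (eval₂RingHom ι ρ).comp C = ι := by ext x; simp
  have hder : derivative ((h + C b₁ * X + C b₂ * X ^ 2).map ι) =
      (derivative h).map ι + C (ι b₁) + C (2 * ι b₂) * X := by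
    simp only [derivative_map, derivative_add, derivative_mul, derivative_C, derivative_X,
      derivative_X_pow, Polynomial.map_add, Polynomial.map_mul, map_C, map_X, C_mul]
    have h2 : (C (ι 2) : L[X]) = C 2 := by rw [map_ofNat]
    simp
    linear_combination (C (ι b₂) * X) * h2
  obtain ⟨k, hk⟩ := hdvd
  rw [hder] at hk
  have hρ := congrArg (eval ρ) hk
  have hσ := congrArg (eval σ) hk
  simp only [eval_add, eval_mul, eval_sub, eval_C, eval_X, sub_self, zero_mul, mul_zero] at hρ hσ
  refine ⟨?_, ?_, by linear_combination hρ⟩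
  · have hA' := congrArg (fun P => P.map (eval₂RingHom ι ρ)) hA
    simp only [Polynomial.map_mul, Polynomial.map_sub, map_X, map_C, coe_eval₂RingHom, eval₂_X,
      Polynomial.map_map, hcomp] at hA'
    rw [← eval_map] at hA'
    have h1 : (A + C (C (2 * b₂))).map (eval₂RingHom ι ρ) = (X - C σ) * k := by
      refine mul_left_cancel₀ (X_sub_C_ne_zero ρ) ?_
      rw [← mul_assoc, ← hk, Polynomial.map_add, mul_add, hA', map_C]
      have h3 : eval ρ ((derivative h).map ι) = -(ι b₁ + 2 * ι b₂ * ρ) := by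
        linear_combination hρ
      rw [h3]
      simp only [coe_eval₂RingHom, eval₂_C, map_mul, map_neg, map_add, map_ofNat]
      ring
    rw [h1]; simp
  · simp only [critE, Polynomial.map_mul, Polynomial.map_sub, Polynomial.map_add, map_X, map_C,
      coe_eval₂RingHom, eval₂_X, Polynomial.map_map, hcomp, Polynomial.map_ofNat, eval_sub,
      eval_mul, eval_add, eval_X, eval_C, eval_ofNat]
    simp only [← eval_map]
    simp only [Polynomial.map_add, Polynomial.map_mul, map_C, map_X, Polynomial.map_pow, eval_add,
      eval_mul, eval_C, eval_X, eval_pow] at heq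
    linear_combination (σ - ρ) * (hρ + hσ) + 2 * heq

/-! ### Counting -/

/-- The bound on a two-dimensional slice: only the coefficients of `x` and `x²` vary. -/
lemma card_bad_pairs_le {F : Type*} [Field F] [Fintype F] (h2 : (2 : F) ≠ 0) {h : F[X]}
    (hm : h.Monic) (hn : 3 ≤ h.natDegree) :
    (Finset.univ.filter fun p : F × F =>
      (Dpoly (h + C p.1 * X + C p.2 * X ^ 2)).natDegree = 0 ∨
        ¬ Squarefree (Dpoly (h + C p.1 * X + C p.2 * X ^ 2))).card ≤
      3 * h.natDegree ^ 2 * Fintype.card F := by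
  obtain ⟨A, hA, hAdeg, hAswap⟩ := exists_critA h
  set n := h.natDegree with hndef
  set q := Fintype.card F with hq
  let L := AlgebraicClosure F
  let ι : F →+* L := algebraMap F L
  have hE0 := critE_ne_zero h2 hm hn
  have hEn : (critE h).natDegree ≤ n := natDegree_critE_le (by omega)
  have hEc : ∀ k, ((critE h).coeff k).natDegree ≤ n := fun k =>
    (natDegree_coeff_le_swap _ k).trans (by rwa [swap_critE, natDegree_neg])
  have hE1 : (critE h).natDegree ≠ 0 := by
    intro h0
    obtain ⟨c, hc⟩ := natDegree_eq_zero.1 h0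
    have h1 : eval X (critE h) = 0 := by simp [critE, eval_map]
    rw [← hc, eval_C] at h1
    rw [← hc, h1, C_0] at hE0
    exact hE0 rfl
  have hAn : ∀ b, (A + C (C b)).natDegree ≤ n - 2 := fun b => by rwa [natDegree_add_C]
  have hAc : ∀ b k, ((A + C (C b)).coeff k).natDegree ≤ n - 2 := fun b k => by
    refine (natDegree_coeff_le_swap _ k).trans ?_
    rw [map_add, hAswap, Bivariate.swap_C_C]
    exact hAn b
  let R : F → F[X] := fun b => resultant (A + C (C (2 * b))) (critE h)
  have hRdeg : ∀ b, (R b).natDegree ≤ 2 * n * (n - 2) := fun b => by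
    refine (natDegree_resultant_le _ _ (hAc _) hEc _ _).trans ?_
    calc _ ≤ (n - 2) * n + n * (n - 2) := by gcongr; exact hAn _
      _ = _ := by ring
  -- Outside `B` the resultant is nonzero, and `g'` is nonconstant as its `x`-coefficient is nonzero.
  let B : Finset F := (Finset.univ.filter fun b => R b = 0) ∪ {-h.coeff 2}
  have hB : B.card ≤ n + 1 := (Finset.card_union_le _ _).trans
    (add_le_add ((card_resultant_eq_zero_le A _ hE0 h2).trans hEn) (by simp))
  set S := Finset.univ.filter fun p : F × F =>
      (Dpoly (h + C p.1 * X + C p.2 * X ^ 2)).natDegree = 0 ∨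
        ¬ Squarefree (Dpoly (h + C p.1 * X + C p.2 * X ^ 2)) with hS
  have hspec : ∀ p ∈ S, p.2 ∉ B → ∃ ρ ∈ ((R p.2).map ι).roots.toFinset,
      ι p.1 = -(eval ρ ((derivative h).map ι) + 2 * ι p.2 * ρ) := by
    rintro ⟨b₁, b₂⟩ hp hb
    simp only [B, Finset.mem_union, Finset.mem_filter, Finset.mem_univ, true_and,
      Finset.mem_singleton, not_or] at hb
    have hsmall : (C b₁ * X + C b₂ * X ^ 2 : F[X]).natDegree < h.natDegree := by
      refine lt_of_le_of_lt ?_ hn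
      compute_degree
    have hmonic : (h + C b₁ * X + C b₂ * X ^ 2).Monic := by
      rw [add_assoc]
      exact hm.add_of_left (degree_lt_degree hsmall)
    have hder : 0 < (derivative (h + C b₁ * X + C b₂ * X ^ 2)).natDegree := by
      refine lt_of_lt_of_le zero_lt_one (le_natDegree_of_ne_zero (n := 1) ?_)
      simp only [coeff_derivative, coeff_add, coeff_C_mul, coeff_X_pow]
      simp only [coeff_X]
      norm_num
      refine ⟨fun h0 => hb.2 (by linear_combination h0), ?_⟩
      exact h2
    obtain ⟨ρ, σ, hd, he⟩ := exists_critical_pair ι hmonic hder (Finset.mem_filter.1 hp).2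
    obtain ⟨h1, h3, h4⟩ := critical_pair_spec ι hA hd he
    refine ⟨ρ, ?_, h4⟩
    rw [Multiset.mem_toFinset, mem_roots ((Polynomial.map_ne_zero_iff ι.injective).2 hb.1)]
    exact eval_resultant_eq_zero ι _ _ hE1 h1 h3
  -- For `b₂ ∉ B`, each root `ρ` of `R b₂` accounts for at most one `b₁`.
  have hgood : (S.filter fun p => p.2 ∉ B).card ≤ 2 * n * (n - 2) * q := by
    refine (Finset.card_le_mul_card_image (f := Prod.snd) _ (2 * n * (n - 2)) ?_).trans ?_
    · intro b₂ hb₂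
      have hinj : Set.InjOn (fun p : F × F => ι p.1)
          ((S.filter fun p => p.2 ∉ B).filter fun p => p.2 = b₂ : Finset (F × F)) := by
        rintro ⟨x, y⟩ hx ⟨z, w⟩ hz hxz
        simp only [Finset.coe_filter, Set.mem_ofPred_eq] at hx hz
        exact Prod.ext (ι.injective hxz) (hx.2.trans hz.2.symm)
      rw [← Finset.card_image_of_injOn hinj]
      calc _ ≤ (((R b₂).map ι).roots.toFinset.image fun ρ =>
              -(eval ρ ((derivative h).map ι) + 2 * ι b₂ * ρ)).card := by
            refine Finset.card_le_card fun v hv => ?_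
            obtain ⟨p, hp, rfl⟩ := Finset.mem_image.1 hv
            obtain ⟨hpSB, rfl⟩ := Finset.mem_filter.1 hp
            obtain ⟨hpS, hpB⟩ := Finset.mem_filter.1 hpSB
            obtain ⟨ρ, hρ, he⟩ := hspec p hpS hpB
            exact Finset.mem_image.2 ⟨ρ, hρ, he.symm⟩
        _ ≤ ((R b₂).map ι).roots.toFinset.card := Finset.card_image_le
        _ ≤ ((R b₂).map ι).roots.card := Multiset.toFinset_card_le _
        _ ≤ ((R b₂).map ι).natDegree := card_roots' _
        _ ≤ _ := by rw [natDegree_map]; exact hRdeg _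
    · exact Nat.mul_le_mul_left _ (Finset.card_le_univ _)
  have hbadB : (S.filter fun p => ¬ p.2 ∉ B).card ≤ q * (n + 1) := by
    calc _ ≤ ((Finset.univ : Finset F) ×ˢ B).card := by
          refine Finset.card_le_card fun p hp => ?_
          simpa using (Finset.mem_filter.1 hp).2
      _ ≤ _ := by rw [Finset.card_product, Finset.card_univ]; exact Nat.mul_le_mul_left _ hB
  rw [← Finset.card_filter_add_card_filter_not (s := S) (fun p => p.2 ∉ B)]
  obtain ⟨m, hm'⟩ : ∃ m, n = m + 3 := ⟨n - 3, by omega⟩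
  have hle : 2 * n * (n - 2) + (n + 1) ≤ 3 * n ^ 2 := by
    rw [hm', show m + 3 - 2 = m + 1 by omega]
    nlinarith
  calc _ ≤ 2 * n * (n - 2) * q + q * (n + 1) := add_le_add hgood hbadB
    _ = (2 * n * (n - 2) + (n + 1)) * q := by ring
    _ ≤ _ := Nat.mul_le_mul_right _ hle

lemma natDegree_X_pow_add_of_lt {F : Type*} [Field F] {n : ℕ} {p : F[X]}
    (hp : p.degree < (n : WithBot ℕ)) : (X ^ n + p).natDegree = n := by
  refine natDegree_eq_of_degree_eq_some ?_
  rw [degree_add_eq_left_of_degree_lt (by rwa [degree_X_pow]), degree_X_pow]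

/-- The set `A_n` of coefficient vectors `a` for which `D_{f_a+α}(t)` is constant or not
squarefree has cardinality at most `3 n² q^{n-2}`. -/
theorem card_A_le (q n : ℕ) (hq : Odd q) (hn : 1 < n)
    (F : Type) [Field F] [Fintype F] (hF : Fintype.card F = q)
    (α : Polynomial F) (hdeg : α.degree < n) :
    (Finset.univ.filter fun a : Fin (n - 1) → F =>
        (Dpoly (fPoly n a + α)).natDegree = 0 ∨ ¬ Squarefree (Dpoly (fPoly n a + α))).card ≤
      3 * n ^ 2 * q ^ (n - 2) := by
  have h2 : (2 : F) ≠ 0 := by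
    refine Ring.two_ne_zero fun hc => ?_
    have := FiniteField.even_card_of_char_two hc
    rw [hF] at this
    exact (Nat.not_even_iff_odd.2 hq) (Nat.even_iff.2 this)
  obtain rfl | ⟨m, rfl⟩ : n = 2 ∨ ∃ m, n = m + 3 := by
    rcases Nat.lt_or_ge n 3 with h | h
    · left; omega
    · exact Or.inr ⟨n - 3, by omega⟩
  · rw [Finset.card_eq_zero.2]
    · exact Nat.zero_le _
    rw [Finset.filter_eq_empty_iff]
    intro a _ hbad
    set g := fPoly 2 a + α with hg
    have hsmall : (C (a 0) * X + α).degree < 2 := by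
      refine (degree_add_le _ _).trans_lt (max_lt ?_ hdeg)
      exact (degree_C_mul_X_le _).trans_lt (by norm_num)
    have hg' : g = X ^ 2 + (C (a 0) * X + α) := by
      simp [hg, fPoly, add_assoc]
    have hmonic : g.Monic := by
      rw [hg']; exact monic_X_pow_add (by exact_mod_cast hsmall)
    have hnat : g.natDegree = 2 := by
      rw [hg']; exact natDegree_X_pow_add_of_lt (by exact_mod_cast hsmall)
    have hder : (derivative g).natDegree = 1 := by
      refine le_antisymm ((natDegree_derivative_le g).trans (by rw [hnat])) ?_
      refine le_natDegree_of_ne_zero ?_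
      rw [coeff_derivative, show 1 + 1 = g.natDegree by rw [hnat], hmonic.coeff_natDegree]
      norm_num
      exact h2
    obtain ⟨ρ, σ, hd, -⟩ := exists_critical_pair (algebraMap F (AlgebraicClosure F)) hmonic
      (by omega) hbad
    have hne : derivative (g.map (algebraMap F (AlgebraicClosure F))) ≠ 0 := by
      rw [derivative_map]
      refine (Polynomial.map_ne_zero_iff (algebraMap F (AlgebraicClosure F)).injective).2 ?_
      rintro h0
      simp [h0] at hder
    have := natDegree_le_of_dvd hd hne
    rw [natDegree_mul (X_sub_C_ne_zero _) (X_sub_C_ne_zero _), natDegree_X_sub_C,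
      natDegree_X_sub_C, derivative_map, natDegree_map] at this
    omega
  · change (Finset.univ.filter fun a : Fin (m + 2) → F => _).card ≤ 3 * (m + 3) ^ 2 * q ^ (m + 1)
    set S := Finset.univ.filter fun a : Fin (m + 2) → F =>
        (Dpoly (fPoly (m + 3) a + α)).natDegree = 0 ∨
          ¬ Squarefree (Dpoly (fPoly (m + 3) a + α)) with hS
    let T : (Fin (m + 2) → F) → (Fin m → F) := fun a i => a i.succ.succ
    refine (Finset.card_le_mul_card_image (f := T) S (3 * (m + 3) ^ 2 * q) ?_).trans ?_
    · intro c _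
      set h : F[X] := X ^ (m + 3) +
        (∑ i : Fin m, C (c i) * X ^ ((i : ℕ) + 3) + α) with hh
      have hsmall : (∑ i : Fin m, C (c i) * X ^ ((i : ℕ) + 3) + α).degree <
          ((m + 3 : ℕ) : WithBot ℕ) := by
        refine (degree_add_le _ _).trans_lt (max_lt ?_ hdeg)
        refine (degree_sum_le _ _).trans_lt ((Finset.sup_lt_iff (WithBot.bot_lt_coe _)).2 ?_)
        intro i _
        refine (degree_C_mul_X_pow_le _ _).trans_lt ?_
        exact_mod_cast Nat.add_lt_add_right i.2 3
      have hmonic : h.Monic := monic_X_pow_add hsmall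
      have hnat : h.natDegree = m + 3 :=
        natDegree_X_pow_add_of_lt hsmall
      have key := card_bad_pairs_le h2 hmonic (by omega)
      rw [hnat, hF] at key
      refine le_trans ?_ key
      refine Finset.card_le_card_of_injOn (fun a => (a 0, a 1)) ?_ ?_
      · intro a ha
        obtain ⟨haS, rfl⟩ := Finset.mem_filter.1 ha
        have hf : fPoly (m + 3) a + α = h + C (a 0) * X + C (a 1) * X ^ 2 := by
          change X ^ (m + 3) + ∑ i : Fin (m + 2), C (a i) * X ^ ((i : ℕ) + 1) + α = _
          rw [Fin.sum_univ_succ, Fin.sum_univ_succ]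
          simp only [hh, T, Fin.val_succ, Fin.val_zero, Fin.succ_zero_eq_one, Fin.val_one]
          ring
        simp only [hS, Finset.mem_filter, Finset.mem_univ, true_and] at haS
        rw [hf] at haS
        simpa using haS
      · intro a ha b hb hab
        have h1 := (Finset.mem_filter.1 ha).2
        have h3 := (Finset.mem_filter.1 hb).2
        obtain ⟨h4, h5⟩ := Prod.ext_iff.1 hab
        funext i
        refine Fin.cases h4 (fun i => Fin.cases h5 (fun i => ?_) i) i
        exact congrFun (h1.trans h3.symm) i
    · calc _ ≤ 3 * (m + 3) ^ 2 * q * q ^ m := by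
            refine Nat.mul_le_mul_left _ ((Finset.card_le_univ _).trans ?_)
            simp [hF]
        _ = _ := by ring
end
end
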